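/- arXiv:1805.01662 — 4 statements merged into one kernel-verified Lean document; each statement's English description precedes it below -/
import Mathlib

section
/- Suppose Assumption 1 holds. Then P̃ is stochastic (so I − e^{−α}P̃ is invertible and the series Σ_{k=0}^∞ a_{k+1,1} e^{−αk} P̃^k converges absolutely), and there exists w < ∞ such that κ(ε) = μ(I − e^{−α}P̃)^{−1} r + ε e^{−α} μ (Σ_{k=0}^∞ a_{k+1,1} e^{−αk} P̃^k) P̃⁽¹⁾ (I − e^{−α}P̃)^{−1} r + O(ε²(log(1/ε))^w) as ε↓0. -/
open Matrix Topology Filter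

/-- The matrix norm ‖A‖ = max_x Σ_y |A(x,y)|. -/
noncomputable def matNorm {T : Type*} [Fintype T] (A : Matrix T T ℝ) : ℝ :=
  ⨆ x, ∑ y, |A x y|

/-- A square matrix is stochastic if all entries are nonnegative and every row sums to 1. -/
def IsStochastic {T : Type*} [Fintype T] (P : Matrix T T ℝ) : Prop :=
  (∀ x y, 0 ≤ P x y) ∧ ∀ x, ∑ y, P x y = 1

/-- The ordered product P 1 * P 2 * ⋯ * P j. -/
noncomputable def prodP {T : Type*} [Fintype T] [DecidableEq T]
    (P : ℕ → Matrix T T ℝ) (j : ℕ) : Matrix T T ℝ :=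
  ((List.range j).map fun i => P (i + 1)).prod

/-- The expected infinite-horizon discounted reward
κ = Σ_{j=0}^∞ e^{−αj} μ (P₁⋯P_j) r. -/
noncomputable def kappa {S : Type*} [Fintype S] [DecidableEq S]
    (α : ℝ) (μ r : S → ℝ) (P : ℕ → Matrix S S ℝ) : ℝ :=
  ∑' j : ℕ, Real.exp (-α * j) * (μ ⬝ᵥ (prodP P j *ᵥ r))

section AbstractPart

set_option linter.unusedSectionVars false

variable {R : Type*} [NormedRing R] [NormedAlgebra ℝ R] [NormOneClass R]

/-- First-order term. -/
noncomputable def foT (a : ℕ → ℝ) (T T1 : R) : ℕ → R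
  | 0 => 0
  | j + 1 => foT a T T1 j * T + a (j + 1) • (T ^ j * T1)

/-- Ordered product, recursively. -/
noncomputable def qoT (P : ℕ → R) : ℕ → R
  | 0 => 1
  | j + 1 => qoT P j * P (j + 1)

lemma norm_pow_le_one' {T : R} (hT : ‖T‖ ≤ 1) (j : ℕ) : ‖T ^ j‖ ≤ 1 :=
  (norm_pow_le T j).trans (pow_le_one₀ (norm_nonneg _) hT)

lemma norm_mul_le_left' {X Y : R} (h : ‖Y‖ ≤ 1) : ‖X * Y‖ ≤ ‖X‖ :=
  (norm_mul_le X Y).trans (mul_le_of_le_one_right (norm_nonneg _) h)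

lemma norm_mul_le_right' {X Y : R} (h : ‖X‖ ≤ 1) : ‖X * Y‖ ≤ ‖Y‖ :=
  (norm_mul_le X Y).trans (mul_le_of_le_one_left (norm_nonneg _) h)

lemma norm_qoT {P : ℕ → R} (hP : ∀ i, ‖P (i + 1)‖ ≤ 1) (j : ℕ) : ‖qoT P j‖ ≤ 1 := by
  induction j with
  | zero => simp [qoT]
  | succ j ih => exact (norm_mul_le_left' (hP j)).trans ih

lemma norm_foT {a : ℕ → ℝ} {T T1 : R} {M : ℝ} {q : ℕ} (hM0 : 0 ≤ M) (hT : ‖T‖ ≤ 1)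
    (hM : ∀ i : ℕ, |a (i + 1)| * ‖T1‖ ≤ M * ((i : ℝ) + 1) ^ q) (j : ℕ) :
    ‖foT a T T1 j‖ ≤ j * (M * (j : ℝ) ^ q) := by
  induction j with
  | zero => simp [foT]
  | succ j ih =>
    have h1 : ‖foT a T T1 (j + 1)‖ ≤ ‖foT a T T1 j‖ + M * ((j : ℝ) + 1) ^ q := by
      refine (norm_add_le _ _).trans (add_le_add (norm_mul_le_left' hT) ?_)
      rw [norm_smul, Real.norm_eq_abs]
      exact (mul_le_mul_of_nonneg_left (norm_mul_le_right' (norm_pow_le_one' hT j))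
        (abs_nonneg _)).trans (hM j)
    have h2 : (j : ℝ) * (M * (j : ℝ) ^ q) ≤ j * (M * ((j : ℝ) + 1) ^ q) := by gcongr; linarith
    push_cast
    linarith

lemma norm_zeroth {a : ℕ → ℝ} {P : ℕ → R} {T T1 : R} {M ε η : ℝ} {q : ℕ} (hM0 : 0 ≤ M)
    (hε : 0 ≤ ε) (hT : ‖T‖ ≤ 1)
    (hP : ∀ i, ‖P (i + 1)‖ ≤ 1)
    (hM : ∀ i : ℕ, |a (i + 1)| * ‖T1‖ ≤ M * ((i : ℝ) + 1) ^ q) (j : ℕ)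
    (hη : ∀ i < j, ‖P (i + 1) - (T + (ε * a (i + 1)) • T1)‖ ≤ η) :
    ‖qoT P j - T ^ j‖ ≤ j * (ε * (M * (j : ℝ) ^ q) + η) := by
  induction j with
  | zero => simp [qoT]
  | succ j ih =>
    have ih' := ih fun i hi => hη i (by omega)
    have e : qoT P (j + 1) - T ^ (j + 1) = (qoT P j - T ^ j) * T
        + qoT P j * ((P (j + 1) - (T + (ε * a (j + 1)) • T1)) + (ε * a (j + 1)) • T1) := by
      simp only [qoT, pow_succ]; noncomm_ring
    have h1 : ‖(ε * a (j + 1)) • T1‖ ≤ ε * (M * ((j : ℝ) + 1) ^ q) := by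
      rw [norm_smul, Real.norm_eq_abs, abs_mul, abs_of_nonneg hε, mul_assoc]
      exact mul_le_mul_of_nonneg_left (hM j) hε
    have h2 : ‖qoT P (j + 1) - T ^ (j + 1)‖
        ≤ ‖qoT P j - T ^ j‖ + (η + ε * (M * ((j : ℝ) + 1) ^ q)) := by
      rw [e]
      refine (norm_add_le _ _).trans (add_le_add (norm_mul_le_left' hT) ?_)
      refine (norm_mul_le_right' (norm_qoT hP j)).trans ?_
      exact (norm_add_le _ _).trans (add_le_add (hη j (by omega)) h1)
    have h3 : (j : ℝ) * (ε * (M * (j : ℝ) ^ q) + η) ≤ j * (ε * (M * ((j : ℝ) + 1) ^ q) + η) := by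
      gcongr; linarith
    push_cast
    linarith

lemma norm_first {a : ℕ → ℝ} {P : ℕ → R} {T T1 : R} {M ε η : ℝ} {q : ℕ} (hM0 : 0 ≤ M)
    (hε : 0 ≤ ε) (hη0 : 0 ≤ η) (hT : ‖T‖ ≤ 1)
    (hP : ∀ i, ‖P (i + 1)‖ ≤ 1)
    (hM : ∀ i : ℕ, |a (i + 1)| * ‖T1‖ ≤ M * ((i : ℝ) + 1) ^ q) (j : ℕ)
    (hη : ∀ i < j, ‖P (i + 1) - (T + (ε * a (i + 1)) • T1)‖ ≤ η) :
    ‖qoT P j - T ^ j - ε • foT a T T1 j‖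
      ≤ j * (η + ε * (M * (j : ℝ) ^ q) * (j * (ε * (M * (j : ℝ) ^ q) + η))) := by
  induction j with
  | zero => simp [qoT, foT]
  | succ j ih =>
    have ih' := ih fun i hi => hη i (by omega)
    have e : qoT P (j + 1) - T ^ (j + 1) - ε • foT a T T1 (j + 1)
        = (qoT P j - T ^ j - ε • foT a T T1 j) * T
        + qoT P j * (P (j + 1) - (T + (ε * a (j + 1)) • T1))
        + (qoT P j - T ^ j) * ((ε * a (j + 1)) • T1) := by
      simp only [qoT, foT, pow_succ, smul_add, smul_sub, smul_smul, sub_mul, mul_sub, mul_add,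
        smul_mul_assoc, mul_smul_comm]
      abel
    have h1 : ‖(ε * a (j + 1)) • T1‖ ≤ ε * (M * ((j : ℝ) + 1) ^ q) := by
      rw [norm_smul, Real.norm_eq_abs, abs_mul, abs_of_nonneg hε, mul_assoc]
      exact mul_le_mul_of_nonneg_left (hM j) hε
    have h0 := norm_zeroth hM0 hε hT hP hM j fun i hi => hη i (by omega)
    have h2 : ‖qoT P (j + 1) - T ^ (j + 1) - ε • foT a T T1 (j + 1)‖
        ≤ ‖qoT P j - T ^ j - ε • foT a T T1 j‖ + η
          + (j * (ε * (M * (j : ℝ) ^ q) + η)) * (ε * (M * ((j : ℝ) + 1) ^ q)) := by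
      rw [e]
      refine (norm_add_le _ _).trans (add_le_add ((norm_add_le _ _).trans
        (add_le_add (norm_mul_le_left' hT) ?_)) ?_)
      · exact (norm_mul_le_right' (norm_qoT hP j)).trans (hη j (by omega))
      · exact (norm_mul_le _ _).trans (mul_le_mul h0 h1 (norm_nonneg _) (by positivity))
    have h3 : (j : ℝ) * (η + ε * (M * (j : ℝ) ^ q) * (j * (ε * (M * (j : ℝ) ^ q) + η)))
        ≤ j * (η + ε * (M * ((j : ℝ) + 1) ^ q)
          * (((j : ℝ) + 1) * (ε * (M * ((j : ℝ) + 1) ^ q) + η))) := by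
      gcongr <;> linarith
    have h4 : (j * (ε * (M * (j : ℝ) ^ q) + η)) * (ε * (M * ((j : ℝ) + 1) ^ q))
        ≤ ε * (M * ((j : ℝ) + 1) ^ q)
          * (((j : ℝ) + 1) * (ε * (M * ((j : ℝ) + 1) ^ q) + η)) := by
      rw [mul_comm]
      gcongr <;> linarith
    push_cast
    linarith

lemma summable_poly_geom (m : ℕ) {y : ℝ} (hy0 : 0 < y) (hy1 : y < 1) :
    Summable fun j : ℕ => ((j : ℝ) + 1) ^ m * y ^ j := by
  have h := summable_pow_mul_geometric_of_norm_lt_one (R := ℝ) m (r := y)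
    (by rwa [Real.norm_eq_abs, abs_of_pos hy0])
  have h2 := ((summable_nat_add_iff 1).2 h).mul_left y⁻¹
  refine h2.congr fun j => ?_
  push_cast
  field_simp
  ring

variable [CompleteSpace R]

lemma abstract_main {a : ℕ → ℝ} {P : ℕ → R} {T T1 G : R} {M A ε x y C u : ℝ} {q m : ℕ}
    (hM0 : 0 ≤ M) (hT : ‖T‖ ≤ 1) (hP : ∀ i, ‖P (i + 1)‖ ≤ 1)
    (hA : ∀ i : ℕ, |a (i + 1)| ≤ A * ((i : ℝ) + 1) ^ q)
    (hM : ∀ i : ℕ, |a (i + 1)| * ‖T1‖ ≤ M * ((i : ℝ) + 1) ^ q)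
    (hy0 : 0 < y) (hy1 : y < 1) (hx : x = y ^ 2)
    (hG : (1 - x • T) * G = 1)
    (hR : ∀ j : ℕ, ‖qoT P j - T ^ j - ε • foT a T T1 j‖ * y ^ j ≤ C * ((j : ℝ) + 1) ^ m * u) :
    (Summable fun j : ℕ => x ^ j • qoT P j) ∧
    (‖(∑' j : ℕ, x ^ j • qoT P j)
      - (G + (ε * x) • ((∑' k : ℕ, (a (k + 1) * x ^ k) • T ^ k) * T1 * G))‖
      ≤ C * (∑' j : ℕ, ((j : ℝ) + 1) ^ m * y ^ j) * u) := by
  have hx0 : 0 < x := by rw [hx]; positivity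
  have hx1 : x < 1 := by rw [hx]; nlinarith
  have sQ : Summable fun j : ℕ => x ^ j • qoT P j := by
    refine Summable.of_norm_bounded (summable_geometric_of_lt_one hx0.le hx1) fun j => ?_
    rw [norm_smul, Real.norm_eq_abs, abs_of_pos (pow_pos hx0 j)]
    exact mul_le_of_le_one_right (pow_pos hx0 j).le (norm_qoT hP j)
  have sT : Summable fun j : ℕ => x ^ j • T ^ j := by
    refine Summable.of_norm_bounded (summable_geometric_of_lt_one hx0.le hx1) fun j => ?_
    rw [norm_smul, Real.norm_eq_abs, abs_of_pos (pow_pos hx0 j)]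
    exact mul_le_of_le_one_right (pow_pos hx0 j).le (norm_pow_le_one' hT j)
  have sB : Summable fun k : ℕ => (a (k + 1) * x ^ k) • T ^ k := by
    refine Summable.of_norm_bounded ((summable_poly_geom q hx0 hx1).mul_left A) fun j => ?_
    rw [norm_smul, Real.norm_eq_abs, abs_mul, abs_of_pos (pow_pos hx0 j), ← mul_assoc]
    refine (mul_le_of_le_one_right (by positivity) (norm_pow_le_one' hT j)).trans ?_
    exact mul_le_mul_of_nonneg_right (hA j) (pow_pos hx0 j).le
  have sF : Summable fun j : ℕ => x ^ j • foT a T T1 j := by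
    refine Summable.of_norm_bounded ((summable_poly_geom (q + 1) hx0 hx1).mul_left M) fun j => ?_
    rw [norm_smul, Real.norm_eq_abs, abs_of_pos (pow_pos hx0 j), mul_comm, ← mul_assoc]
    refine mul_le_mul_of_nonneg_right ((norm_foT hM0 hT hM j).trans ?_) (pow_pos hx0 j).le
    rw [pow_succ]
    calc (j : ℝ) * (M * (j : ℝ) ^ q) ≤ ((j : ℝ) + 1) * (M * ((j : ℝ) + 1) ^ q) := by
          gcongr <;> linarith
      _ = _ := by ring
  have eT : (∑' j : ℕ, x ^ j • T ^ j) = G := by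
    have h := sT.tsum_eq_zero_add
    have h2 : (∑' j : ℕ, x ^ (j + 1) • T ^ (j + 1)) = (∑' j : ℕ, x ^ j • T ^ j) * (x • T) := by
      rw [← sT.tsum_mul_right]
      refine tsum_congr fun j => ?_
      rw [pow_succ, pow_succ, smul_mul_smul_comm]
    rw [h2] at h
    have h3 : (∑' j : ℕ, x ^ j • T ^ j) * (1 - x • T) = 1 := by
      rw [mul_sub, mul_one, sub_eq_iff_eq_add]
      simpa using h
    calc _ = (∑' j : ℕ, x ^ j • T ^ j) * ((1 - x • T) * G) := by rw [hG, mul_one]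
      _ = G := by rw [← mul_assoc, h3, one_mul]
  have eF : (∑' j : ℕ, x ^ j • foT a T T1 j)
      = x • ((∑' k : ℕ, (a (k + 1) * x ^ k) • T ^ k) * T1 * G) := by
    have h := sF.tsum_eq_zero_add
    have h2 : (∑' j : ℕ, x ^ (j + 1) • foT a T T1 (j + 1))
        = (∑' j : ℕ, x ^ j • foT a T T1 j) * (x • T)
          + (∑' k : ℕ, (a (k + 1) * x ^ k) • T ^ k) * (x • T1) := by
      rw [← sF.tsum_mul_right, ← sB.tsum_mul_right, ← (sF.mul_right _).tsum_add (sB.mul_right _)]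
      refine tsum_congr fun j => ?_
      rw [foT, smul_add, smul_smul, smul_mul_smul_comm, smul_mul_smul_comm, pow_succ]
      congr 2; ring
    rw [h2] at h
    have h3 : (∑' j : ℕ, x ^ j • foT a T T1 j) * (1 - x • T)
        = (∑' k : ℕ, (a (k + 1) * x ^ k) • T ^ k) * (x • T1) := by
      rw [mul_sub, mul_one, sub_eq_iff_eq_add, add_comm]
      simpa [foT] using h
    calc _ = (∑' j : ℕ, x ^ j • foT a T T1 j) * ((1 - x • T) * G) := by rw [hG, mul_one]
      _ = _ := by rw [← mul_assoc, h3, mul_smul_comm, smul_mul_assoc]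
  refine ⟨sQ, ?_⟩
  have e : (∑' j : ℕ, x ^ j • qoT P j)
      - (G + (ε * x) • ((∑' k : ℕ, (a (k + 1) * x ^ k) • T ^ k) * T1 * G))
      = ∑' j : ℕ, x ^ j • (qoT P j - T ^ j - ε • foT a T T1 j) := by
    have h1 : ∀ j : ℕ, x ^ j • (qoT P j - T ^ j - ε • foT a T T1 j)
        = x ^ j • qoT P j - x ^ j • T ^ j - ε • (x ^ j • foT a T T1 j) := fun j => by
      rw [smul_sub, smul_sub, smul_comm ε]
    simp_rw [h1]
    rw [(sQ.sub sT).tsum_sub (sF.const_smul ε), sQ.tsum_sub sT, sF.tsum_const_smul, eT, eF,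
      smul_smul]
    abel
  rw [e]
  refine tsum_of_norm_bounded (g := fun j : ℕ => C * (((j : ℝ) + 1) ^ m * y ^ j) * u)
    ((((summable_poly_geom m hy0 hy1).hasSum).mul_left C).mul_right u) fun j => ?_
  rw [norm_smul, Real.norm_eq_abs, abs_of_pos (pow_pos hx0 j), hx]
  calc (y ^ 2) ^ j * ‖qoT P j - T ^ j - ε • foT a T T1 j‖
      = ‖qoT P j - T ^ j - ε • foT a T T1 j‖ * y ^ j * y ^ j := by ring
    _ ≤ C * ((j : ℝ) + 1) ^ m * u * y ^ j :=
        mul_le_mul_of_nonneg_right (hR j) (pow_pos hy0 j).le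
    _ = _ := by ring

end AbstractPart

lemma log_inv_tendsto : Tendsto (fun ε : ℝ => Real.log (1 / ε)) (𝓝[>] 0) atTop := by
  simp only [one_div]
  exact Real.tendsto_log_atTop.comp tendsto_inv_nhdsGT_zero

lemma exists_poly_bound {a : ℕ → ℝ} {p : ℝ}
    (hii : ∃ c > (0:ℝ), ∃ i₀ : ℕ, ∀ i : ℕ, i₀ ≤ i → |a i| ≤ c * (i : ℝ) ^ p) :
    ∃ A : ℝ, ∃ q : ℕ, 0 ≤ A ∧ ∀ i : ℕ, |a (i + 1)| ≤ A * ((i : ℝ) + 1) ^ q := by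
  obtain ⟨c, hc, i₀, h⟩ := hii
  have hs : 0 ≤ ∑ i ∈ Finset.range i₀, |a i| := Finset.sum_nonneg fun _ _ => abs_nonneg _
  refine ⟨c + ∑ i ∈ Finset.range i₀, |a i|, ⌈p⌉₊, by positivity, fun i => ?_⟩
  have h1 : (1 : ℝ) ≤ (i : ℝ) + 1 := by linarith [(Nat.cast_nonneg i : (0 : ℝ) ≤ i)]
  by_cases hi : i₀ ≤ i + 1
  · refine (h _ hi).trans ?_
    push_cast
    rw [← Real.rpow_natCast]
    gcongr
    · linarith
    · exact Nat.le_ceil p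
  · have h2 : |a (i + 1)| ≤ ∑ i ∈ Finset.range i₀, |a i| :=
      Finset.single_le_sum (f := fun i => |a i|) (fun _ _ => abs_nonneg _)
        (Finset.mem_range.2 (by omega))
    calc |a (i + 1)| ≤ (c + ∑ i ∈ Finset.range i₀, |a i|) * 1 := by linarith
      _ ≤ _ := by
        gcongr
        exact one_le_pow₀ h1

/-- The scalar estimate for the remainder. -/
lemma remainder_bound {R : Type*} [NormedRing R] [NormedAlgebra ℝ R] [NormOneClass R]
    {a : ℕ → ℝ} {P : ℕ → R} {T T1 : R} {M ε c s δ α : ℝ} {q : ℕ} (hM0 : 0 ≤ M) (hc : 0 < c)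
    (hT : ‖T‖ ≤ 1) (hP : ∀ i, ‖P (i + 1)‖ ≤ 1)
    (hM : ∀ i : ℕ, |a (i + 1)| * ‖T1‖ ≤ M * ((i : ℝ) + 1) ^ q)
    (hε : 0 < ε) (hε1 : ε < 1) (hα : 0 < α) (hL : 1 ≤ Real.log (1 / ε))
    (hLδ : 4 / α ≤ Real.log (1 / ε) ^ δ)
    (h : ∀ i : ℕ, 1 ≤ i → (i : ℝ) ≤ Real.log (1/ε) ^ (1 + δ) →
        ‖P i - (T + (ε * a i) • T1)‖ ≤ c * ε ^ 2 * Real.log (1/ε) ^ s) (j : ℕ) :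
    ‖qoT P j - T ^ j - ε • foT a T T1 j‖ * Real.exp (-(α / 2)) ^ j
      ≤ (c + M ^ 2 + M * c + M + 2) * ((j : ℝ) + 1) ^ (2 * q + 3)
        * (ε ^ 2 * Real.log (1 / ε) ^ (max s 0)) := by
  set L := Real.log (1 / ε) with hLdef
  set Z := L ^ (max s 0) with hZ
  have hZ1 : 1 ≤ Z := Real.one_le_rpow hL (le_max_right _ _)
  have hsZ : L ^ s ≤ Z := Real.rpow_le_rpow_of_exponent_le hL (le_max_left _ _)
  have hZ0 : 0 < Z := by linarith
  set J : ℝ := (j : ℝ) + 1 with hJ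
  have hj0 : (0 : ℝ) ≤ j := Nat.cast_nonneg j
  have hJ1 : 1 ≤ J := by linarith
  have hjJ : (j : ℝ) ≤ J := by linarith
  have hy1 : Real.exp (-(α / 2)) ^ j ≤ 1 :=
    pow_le_one₀ (Real.exp_pos _).le (Real.exp_le_one_iff.2 (by linarith))
  have hp1 : J ^ 1 ≤ J ^ (2 * q + 3) := pow_le_pow_right₀ hJ1 (by omega)
  have hp0 : 1 ≤ J ^ (2 * q + 3) := one_le_pow₀ hJ1
  have hp2 : J ^ (2 * q + 2) ≤ J ^ (2 * q + 3) := pow_le_pow_right₀ hJ1 (by omega)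
  have hp3 : J ^ (q + 2) ≤ J ^ (2 * q + 3) := pow_le_pow_right₀ hJ1 (by omega)
  have hp4 : J ^ (q + 1) ≤ J ^ (2 * q + 3) := pow_le_pow_right₀ hJ1 (by omega)
  set W := J ^ (2 * q + 3) with hW
  by_cases hjN : (j : ℝ) ≤ L ^ (1 + δ)
  · have h1 := norm_first (P := P) (η := c * ε ^ 2 * Z) hM0 hε.le (by positivity) hT hP hM j
      fun i hi => by
        have hij : ((i + 1 : ℕ) : ℝ) ≤ j := by exact_mod_cast hi
        refine (h (i + 1) (by omega) (hij.trans hjN)).trans ?_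
        gcongr
    refine (mul_le_of_le_one_right (norm_nonneg _) hy1).trans (h1.trans ?_)
    calc (j : ℝ) * (c * ε ^ 2 * Z + ε * (M * (j : ℝ) ^ q) * (j * (ε * (M * (j : ℝ) ^ q)
            + c * ε ^ 2 * Z)))
        ≤ J * (c * ε ^ 2 * Z + ε * (M * J ^ q) * (J * (ε * (M * J ^ q) + c * ε ^ 2 * Z))) := by
          gcongr
      _ = c * (ε ^ 2 * Z) * J ^ 1 + M ^ 2 * (ε ^ 2 * 1) * J ^ (2 * q + 2)
          + M * c * (ε ^ 2 * Z) * ε * J ^ (q + 2) := by ring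
      _ ≤ c * (ε ^ 2 * Z) * W + M ^ 2 * (ε ^ 2 * Z) * W
          + M * c * (ε ^ 2 * Z) * 1 * W := by gcongr
      _ = (c + M ^ 2 + M * c) * W * (ε ^ 2 * Z) := by ring
      _ ≤ _ := by
        have hle : c + M ^ 2 + M * c ≤ c + M ^ 2 + M * c + M + 2 := by linarith
        exact mul_le_mul_of_nonneg_right (mul_le_mul_of_nonneg_right hle (by positivity))
          (by positivity)
  · have hy2 : Real.exp (-(α / 2)) ^ j ≤ ε ^ 2 := by
      have e1 : ε ^ 2 = Real.exp (-(2 * L)) := by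
        have : L = -Real.log ε := by rw [hLdef, one_div, Real.log_inv]
        rw [this, mul_neg, neg_neg, two_mul, Real.exp_add, Real.exp_log hε, sq]
      rw [e1, ← Real.exp_nat_mul]
      apply Real.exp_le_exp.2
      have e2 : L ^ (1 + δ) = L * L ^ δ := by
        rw [Real.rpow_add (by linarith), Real.rpow_one]
      have e3 : L * (4 / α) ≤ j := by
        have : L * (4 / α) ≤ L * L ^ δ := by gcongr
        linarith [not_le.1 hjN]
      have e4 : L * (4 / α) * (α / 2) ≤ j * (α / 2) := by gcongr
      have e5 : L * (4 / α) * (α / 2) = 2 * L := by field_simp; norm_num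
      linarith
    have h1 : ‖qoT P j - T ^ j - ε • foT a T T1 j‖ ≤ (2 + M) * W := by
      have h2 : ‖ε • foT a T T1 j‖ ≤ M * W := by
        rw [norm_smul, Real.norm_eq_abs, abs_of_pos hε]
        calc ε * ‖foT a T T1 j‖ ≤ 1 * (j * (M * (j : ℝ) ^ q)) :=
              mul_le_mul hε1.le (norm_foT hM0 hT hM j) (norm_nonneg _) zero_le_one
          _ ≤ 1 * (J * (M * J ^ q)) := by gcongr
          _ = M * J ^ (q + 1) := by ring
          _ ≤ _ := by gcongr
      have h3 := norm_sub_le (qoT P j - T ^ j) (ε • foT a T T1 j)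
      have h4 := norm_sub_le (qoT P j) (T ^ j)
      have h5 := norm_qoT hP j
      have h6 := norm_pow_le_one' hT j
      linarith
    calc _ ≤ ((2 + M) * W) * ε ^ 2 :=
          mul_le_mul h1 hy2 (by positivity) (by positivity)
      _ = ((2 + M) * W) * (ε ^ 2 * 1) := by ring
      _ ≤ (c + M ^ 2 + M * c + M + 2) * W * (ε ^ 2 * Z) := by
          have hle : 2 + M ≤ c + M ^ 2 + M * c + M + 2 := by
            nlinarith [sq_nonneg M, mul_nonneg hM0 hc.le]
          exact mul_le_mul (mul_le_mul_of_nonneg_right hle (by positivity))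
            (mul_le_mul_of_nonneg_left hZ1 (by positivity)) (by positivity) (by positivity)

section MatrixPart

set_option linter.unusedSectionVars false

attribute [local instance] Matrix.linftyOpNormedRing Matrix.linftyOpNormedAlgebra

variable {S : Type*} [Fintype S] [Nonempty S] [DecidableEq S]

lemma matNorm_eq (A : Matrix S S ℝ) : matNorm A = ‖A‖ := by
  rw [Matrix.linfty_opNorm_def, matNorm, Finset.sup_univ_eq_ciSup, NNReal.coe_iSup]
  simp

lemma norm_stoch {A : Matrix S S ℝ} (h : IsStochastic A) : ‖A‖ = 1 := by
  rw [← matNorm_eq, matNorm]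
  have : ∀ x, ∑ y, |A x y| = 1 := fun x => by
    rw [← h.2 x]
    exact Finset.sum_congr rfl fun y _ => abs_of_nonneg (h.1 x y)
  simp [this]

lemma entry_le_norm (A : Matrix S S ℝ) (x y : S) : |A x y| ≤ matNorm A := by
  refine (Finset.single_le_sum (f := fun y => |A x y|) (fun _ _ => abs_nonneg _)
    (Finset.mem_univ y)).trans ?_
  exact le_ciSup (f := fun x => ∑ y, |A x y|) (Set.finite_range _).bddAbove x

lemma prodP_eq (P : ℕ → Matrix S S ℝ) (j : ℕ) : prodP P j = qoT P j := by
  induction j with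
  | zero => simp [prodP, qoT]
  | succ j ih =>
    rw [qoT, ← ih]
    simp [prodP, List.range_succ]

lemma stoch_limit (P : ℝ → Matrix S S ℝ) (b : ℝ) (Pt Pt1 : Matrix S S ℝ) (c s : ℝ)
    (hstoch : ∀ ε : ℝ, 0 < ε → IsStochastic (P ε))
    (h : ∀ᶠ ε in 𝓝[>] (0 : ℝ), matNorm (P ε - (Pt + (ε * b) • Pt1))
      ≤ c * ε ^ 2 * Real.log (1/ε) ^ s) : IsStochastic Pt := by
  have hid : Tendsto (fun ε : ℝ => ε) (𝓝[>] 0) (𝓝 0) := nhdsWithin_le_nhds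
  have hlim : Tendsto (fun ε : ℝ => c * ε ^ 2 * Real.log (1/ε) ^ s) (𝓝[>] 0) (𝓝 0) := by
    have h1 := ((tendsto_rpow_mul_exp_neg_mul_atTop_nhds_zero s 2 two_pos).comp
      log_inv_tendsto).const_mul c
    rw [mul_zero] at h1
    refine h1.congr' ?_
    filter_upwards [self_mem_nhdsWithin] with ε hε
    have hε : 0 < ε := hε
    have : Real.exp (-2 * Real.log (1 / ε)) = ε ^ 2 := by
      rw [one_div, Real.log_inv, mul_neg, neg_mul, neg_neg, two_mul, Real.exp_add,
        Real.exp_log hε, sq]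
    simp only [Function.comp]
    rw [this]; ring
  have hent : ∀ x y, Tendsto (fun ε => P ε x y) (𝓝[>] 0) (𝓝 (Pt x y)) := by
    intro x y
    have h1 : Tendsto (fun ε => (P ε - (Pt + (ε * b) • Pt1)) x y) (𝓝[>] 0) (𝓝 0) := by
      refine squeeze_zero_norm' ?_ hlim
      filter_upwards [h] with ε hε
      exact (entry_le_norm _ x y).trans hε
    have h2 : Tendsto (fun ε : ℝ => Pt x y + (ε * b) * Pt1 x y) (𝓝[>] 0) (𝓝 (Pt x y)) := by
      simpa using ((hid.mul_const b).mul_const (Pt1 x y)).const_add (Pt x y)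
    have h3 := h1.add h2
    rw [zero_add] at h3
    refine h3.congr fun ε => ?_
    simp
  constructor
  · intro x y
    refine ge_of_tendsto (hent x y) ?_
    filter_upwards [self_mem_nhdsWithin] with ε hε
    exact (hstoch ε hε).1 x y
  · intro x
    refine tendsto_nhds_unique (tendsto_finsetSum Finset.univ fun y _ => hent x y)
      (tendsto_const_nhds.congr' ?_)
    filter_upwards [self_mem_nhdsWithin] with ε hε
    exact ((hstoch ε hε).2 x).symm

lemma functional_bound (μ r : S → ℝ) (hμ0 : ∀ x, 0 ≤ μ x) (hμ1 : ∑ x, μ x = 1)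
    (A : Matrix S S ℝ) : |μ ⬝ᵥ (A *ᵥ r)| ≤ ‖A‖ * ‖r‖ := by
  have h1 : ∀ x, |(A *ᵥ r) x| ≤ ‖A‖ * ‖r‖ := fun x =>
    (norm_le_pi_norm (A *ᵥ r) x).trans (Matrix.linfty_opNorm_mulVec A r)
  calc |μ ⬝ᵥ (A *ᵥ r)| ≤ ∑ x, |μ x * (A *ᵥ r) x| := Finset.abs_sum_le_sum_abs _ _
    _ ≤ ∑ x, μ x * (‖A‖ * ‖r‖) := by
      refine Finset.sum_le_sum fun x _ => ?_
      rw [abs_mul, abs_of_nonneg (hμ0 x)]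
      exact mul_le_mul_of_nonneg_left (h1 x) (hμ0 x)
    _ = ‖A‖ * ‖r‖ := by rw [← Finset.sum_mul, hμ1, one_mul]

/-- The functional `A ↦ μ A r`. -/
noncomputable def phiL (μ r : S → ℝ) : Matrix S S ℝ →ₗ[ℝ] ℝ where
  toFun A := μ ⬝ᵥ (A *ᵥ r)
  map_add' A B := by rw [Matrix.add_mulVec, dotProduct_add]
  map_smul' c A := by simp [Matrix.smul_mulVec, dotProduct_smul]

lemma matrix_main
    (P : ℕ → ℝ → Matrix S S ℝ) (a : ℕ → ℝ) (Pt Pt1 : Matrix S S ℝ)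
    (s δ p : ℝ) (hδ : 0 < δ)
    (hstoch : ∀ k : ℕ, 1 ≤ k → ∀ ε : ℝ, 0 < ε → IsStochastic (P k ε))
    (hi : ∃ c > (0:ℝ), ∃ ε₀ > (0:ℝ), ∀ ε : ℝ, 0 < ε → ε < ε₀ →
      ∀ i : ℕ, 1 ≤ i → (i : ℝ) ≤ Real.log (1/ε) ^ (1 + δ) →
        matNorm (P i ε - (Pt + (ε * a i) • Pt1)) ≤ c * ε ^ 2 * Real.log (1/ε) ^ s)
    (hii : ∃ c > (0:ℝ), ∃ i₀ : ℕ, ∀ i : ℕ, i₀ ≤ i → |a i| ≤ c * (i : ℝ) ^ p)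
    (α : ℝ) (hα : 0 < α)
    (μ r : S → ℝ) (hμ0 : ∀ x, 0 ≤ μ x) (hμ1 : ∑ x, μ x = 1) :
    IsStochastic Pt ∧
      IsUnit (1 - Real.exp (-α) • Pt) ∧
      Summable (fun k : ℕ => |a (k + 1)| * Real.exp (-α * k) * matNorm (Pt ^ k)) ∧
      Summable (fun k : ℕ => (a (k + 1) * Real.exp (-α * k)) • Pt ^ k) ∧
      ∃ w : ℝ, ∃ c > (0:ℝ), ∃ ε₁ > (0:ℝ), ∀ ε : ℝ, 0 < ε → ε < ε₁ →
        |kappa α μ r (fun k => P k ε) -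
            (μ ⬝ᵥ ((1 - Real.exp (-α) • Pt)⁻¹ *ᵥ r) +
              ε * Real.exp (-α) *
                (μ ⬝ᵥ (((∑' k : ℕ, (a (k + 1) * Real.exp (-α * k)) • Pt ^ k) * Pt1 *
                    (1 - Real.exp (-α) • Pt)⁻¹) *ᵥ r)))|
          ≤ c * ε ^ 2 * Real.log (1/ε) ^ w := by
  obtain ⟨c, hc, ε₀, hε₀, hi⟩ := hi
  obtain ⟨A, q, hA0, hA⟩ := exists_poly_bound hii
  have hev : ∀ᶠ ε in 𝓝[>] (0 : ℝ), ε < ε₀ ∧ ε < 1 ∧ 1 ≤ Real.log (1 / ε) ∧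
      4 / α ≤ Real.log (1 / ε) ^ δ := by
    have h1 : ∀ᶠ ε in 𝓝[>] (0 : ℝ), ε < ε₀ := nhdsWithin_le_nhds (Iio_mem_nhds hε₀)
    have h2 : ∀ᶠ ε in 𝓝[>] (0 : ℝ), ε < 1 := nhdsWithin_le_nhds (Iio_mem_nhds one_pos)
    filter_upwards [h1, h2, log_inv_tendsto.eventually_ge_atTop 1,
      ((tendsto_rpow_atTop hδ).comp log_inv_tendsto).eventually_ge_atTop (4 / α)]
      with ε a1 a2 a3 a4
    exact ⟨a1, a2, a3, a4⟩
  have hPt : IsStochastic Pt := by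
    refine stoch_limit (P 1) (a 1) Pt Pt1 c s (hstoch 1 le_rfl) ?_
    filter_upwards [hev, self_mem_nhdsWithin] with ε hε hε0
    refine hi ε hε0 hε.1 1 le_rfl ?_
    rw [Nat.cast_one]
    exact Real.one_le_rpow hε.2.2.1 (by linarith)
  have hT : ‖Pt‖ ≤ 1 := (norm_stoch hPt).le
  set x := Real.exp (-α) with hx
  have hx0 : 0 < x := Real.exp_pos _
  have hx1 : x < 1 := Real.exp_lt_one_iff.2 (by linarith)
  have hxk : ∀ k : ℕ, Real.exp (-α * k) = x ^ k := fun k => by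
    rw [hx, ← Real.exp_nat_mul, mul_comm]
  have hxT : ‖x • Pt‖ < 1 := by
    rw [norm_smul, norm_stoch hPt, mul_one, Real.norm_eq_abs, abs_of_pos hx0]
    exact hx1
  have hU : IsUnit (1 - x • Pt) := isUnit_one_sub_of_norm_lt_one hxT
  have hG : (1 - x • Pt) * (1 - x • Pt)⁻¹ = 1 :=
    Matrix.mul_nonsing_inv _ ((Matrix.isUnit_iff_isUnit_det _).1 hU)
  have sAbs : Summable (fun k : ℕ => |a (k + 1)| * Real.exp (-α * k) * matNorm (Pt ^ k)) := by
    refine Summable.of_nonneg_of_le (fun k => ?_) (fun k => ?_)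
      ((summable_poly_geom q hx0 hx1).mul_left A)
    · rw [matNorm_eq]; positivity
    · rw [matNorm_eq, hxk, ← mul_assoc]
      refine (mul_le_of_le_one_right (by positivity) (norm_pow_le_one' hT k)).trans ?_
      exact mul_le_mul_of_nonneg_right (hA k) (pow_pos hx0 k).le
  refine ⟨hPt, hU, sAbs, ?_, ?_⟩
  · refine Summable.of_norm_bounded sAbs fun k => ?_
    rw [norm_smul, matNorm_eq, Real.norm_eq_abs, abs_mul, abs_of_pos (Real.exp_pos _)]
  simp_rw [hxk]
  have hM0 : 0 ≤ A * ‖Pt1‖ := by positivity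
  have hM : ∀ i : ℕ, |a (i + 1)| * ‖Pt1‖ ≤ A * ‖Pt1‖ * ((i : ℝ) + 1) ^ q := fun i => by
    calc _ ≤ A * ((i : ℝ) + 1) ^ q * ‖Pt1‖ :=
          mul_le_mul_of_nonneg_right (hA i) (norm_nonneg _)
      _ = _ := by ring
  set M := A * ‖Pt1‖ with hMdef
  set y := Real.exp (-(α / 2)) with hy
  have hy0 : 0 < y := Real.exp_pos _
  have hy1 : y < 1 := Real.exp_lt_one_iff.2 (by linarith)
  have hxy : x = y ^ 2 := by
    rw [hx, hy, ← Real.exp_nat_mul]; congr 1; push_cast; ring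
  set C := c + M ^ 2 + M * c + M + 2 with hC
  set D := C * (∑' j : ℕ, ((j : ℝ) + 1) ^ (2 * q + 3) * y ^ j) with hD
  have hC0 : 0 ≤ C := by positivity
  have hD0 : 0 ≤ D := mul_nonneg hC0 (tsum_nonneg fun j => by positivity)
  obtain ⟨ε₁, hε₁, hsub⟩ := mem_nhdsGT_iff_exists_Ioo_subset.1 hev
  refine ⟨max s 0, D * ‖r‖ + 1, by positivity, ε₁, hε₁, fun ε hε hεlt => ?_⟩
  obtain ⟨b1, b2, b3, b4⟩ := hsub ⟨hε, hεlt⟩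
  have hPn : ∀ i, ‖(fun k => P k ε) (i + 1)‖ ≤ 1 := fun i =>
    (norm_stoch (hstoch (i + 1) (by omega) ε hε)).le
  have hR := remainder_bound (P := fun k => P k ε) (s := s) (δ := δ) hM0 hc hT hPn hM hε b2 hα
    b3 b4 (fun i h1 h2 => by rw [← matNorm_eq]; exact hi ε hε b1 i h1 h2)
  obtain ⟨sQ, hmain⟩ := abstract_main (P := fun k => P k ε) hM0 hT hPn hA hM hy0 hy1 hxy hG hR
  have hcont : Continuous (phiL μ r) := LinearMap.continuous_of_finiteDimensional _
  have hk : kappa α μ r (fun k => P k ε)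
      = phiL μ r (∑' j : ℕ, x ^ j • qoT (fun k => P k ε) j) := by
    have h1 := sQ.hasSum.map (phiL μ r) hcont
    refine Eq.trans ?_ h1.tsum_eq
    rw [kappa]
    refine tsum_congr fun j => ?_
    rw [hxk, prodP_eq, Function.comp, map_smul]
    rfl
  have hfin : kappa α μ r (fun k => P k ε) -
            (μ ⬝ᵥ ((1 - x • Pt)⁻¹ *ᵥ r) +
              ε * x *
                (μ ⬝ᵥ (((∑' k : ℕ, (a (k + 1) * x ^ k) • Pt ^ k) * Pt1 *
                    (1 - x • Pt)⁻¹) *ᵥ r)))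
      = phiL μ r ((∑' j : ℕ, x ^ j • qoT (fun k => P k ε) j)
      - ((1 - x • Pt)⁻¹ + (ε * x) • ((∑' k : ℕ, (a (k + 1) * x ^ k) • Pt ^ k) * Pt1
        * (1 - x • Pt)⁻¹))) := by
    rw [map_sub, map_add, map_smul, hk]
    rfl
  rw [hfin]
  refine (functional_bound μ r hμ0 hμ1 _).trans ?_
  have hL0 : 0 ≤ Real.log (1 / ε) ^ (max s 0) := Real.rpow_nonneg (by linarith) _
  calc _ ≤ D * (ε ^ 2 * Real.log (1 / ε) ^ (max s 0)) * ‖r‖ :=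
        mul_le_mul_of_nonneg_right hmain (norm_nonneg _)
    _ = D * ‖r‖ * ε ^ 2 * Real.log (1 / ε) ^ (max s 0) := by ring
    _ ≤ _ := by gcongr; linarith

end MatrixPart

/-- Theorem 1: under Assumption 1, P̃ is stochastic, I − e^{−α}P̃ is invertible, the series
Σ_k a_{k+1,1} e^{−αk} P̃^k converges absolutely, and there exists w < ∞ with
κ(ε) = μ(I − e^{−α}P̃)⁻¹ r + ε e^{−α} μ (Σ_k a_{k+1,1} e^{−αk} P̃^k) P̃⁽¹⁾ (I − e^{−α}P̃)⁻¹ r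
        + O(ε²(log(1/ε))^w) as ε ↓ 0. -/
theorem discounted_reward_first_order
    {S : Type*} [Fintype S] [Nonempty S] [DecidableEq S]
    (P : ℕ → ℝ → Matrix S S ℝ) (a : ℕ → ℝ) (Pt Pt1 : Matrix S S ℝ)
    (s δ p : ℝ) (hδ : 0 < δ) (hp : 0 < p)
    (hstoch : ∀ k : ℕ, 1 ≤ k → ∀ ε : ℝ, 0 < ε → IsStochastic (P k ε))
    (hi : ∃ c > (0:ℝ), ∃ ε₀ > (0:ℝ), ∀ ε : ℝ, 0 < ε → ε < ε₀ →
      ∀ i : ℕ, 1 ≤ i → (i : ℝ) ≤ Real.log (1/ε) ^ (1 + δ) →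
        matNorm (P i ε - (Pt + (ε * a i) • Pt1)) ≤ c * ε ^ 2 * Real.log (1/ε) ^ s)
    (hii : ∃ c > (0:ℝ), ∃ i₀ : ℕ, ∀ i : ℕ, i₀ ≤ i → |a i| ≤ c * (i : ℝ) ^ p)
    (α : ℝ) (hα : 0 < α)
    (μ r : S → ℝ) (hμ0 : ∀ x, 0 ≤ μ x) (hμ1 : ∑ x, μ x = 1) :
    IsStochastic Pt ∧
      IsUnit (1 - Real.exp (-α) • Pt) ∧
      Summable (fun k : ℕ => |a (k + 1)| * Real.exp (-α * k) * matNorm (Pt ^ k)) ∧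
      Summable (fun k : ℕ => (a (k + 1) * Real.exp (-α * k)) • Pt ^ k) ∧
      ∃ w : ℝ, ∃ c > (0:ℝ), ∃ ε₁ > (0:ℝ), ∀ ε : ℝ, 0 < ε → ε < ε₁ →
        |kappa α μ r (fun k => P k ε) -
            (μ ⬝ᵥ ((1 - Real.exp (-α) • Pt)⁻¹ *ᵥ r) +
              ε * Real.exp (-α) *
                (μ ⬝ᵥ (((∑' k : ℕ, (a (k + 1) * Real.exp (-α * k)) • Pt ^ k) * Pt1 *
                    (1 - Real.exp (-α) • Pt)⁻¹) *ᵥ r)))|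
          ≤ c * ε ^ 2 * Real.log (1/ε) ^ w := by
  exact matrix_main P a Pt Pt1 s δ p hδ hstoch hi hii α hα μ r hμ0 hμ1
end

section
/- Suppose Assumption 1 holds with a_{i1} = i − 1 for all i ≥ 1. Then there exists w < ∞ such that κ(ε) = μ(I − e^{−α}P̃)^{−1} r + ε e^{−2α} μ P̃ (I − e^{−α}P̃)^{−2} P̃⁽¹⁾ (I − e^{−α}P̃)^{−1} r + O(ε²(log(1/ε))^w) as ε↓0. -/
open Matrix Topology Filter

lemma matNorm_mulVec_le {T : Type*} [Fintype T] (A : Matrix T T ℝ) (v : T → ℝ) :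
    ‖A *ᵥ v‖ ≤ matNorm A * ‖v‖ := by
  have h0 : 0 ≤ matNorm A := Real.iSup_nonneg fun x => Finset.sum_nonneg fun y _ => abs_nonneg _
  rw [pi_norm_le_iff_of_nonneg (by positivity)]
  intro x
  have h1 : ∑ y, |A x y| ≤ matNorm A :=
    le_ciSup (f := fun x => ∑ y, |A x y|) (Set.finite_range _).bddAbove x
  calc ‖(A *ᵥ v) x‖ = |∑ y, A x y * v y| := rfl
    _ ≤ ∑ y, |A x y * v y| := Finset.abs_sum_le_sum_abs _ _
    _ ≤ ∑ y, |A x y| * ‖v‖ := by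
        refine Finset.sum_le_sum fun y _ => ?_
        rw [abs_mul]
        exact mul_le_mul_of_nonneg_left (norm_le_pi_norm v y) (abs_nonneg _)
    _ = (∑ y, |A x y|) * ‖v‖ := by rw [Finset.sum_mul]
    _ ≤ matNorm A * ‖v‖ := mul_le_mul_of_nonneg_right h1 (norm_nonneg _)

lemma matNorm_nonneg {T : Type*} [Fintype T] (A : Matrix T T ℝ) : 0 ≤ matNorm A :=
  Real.iSup_nonneg fun x => Finset.sum_nonneg fun y _ => abs_nonneg _

lemma dot_le {T : Type*} [Fintype T] (m v : T → ℝ) (h0 : ∀ x, 0 ≤ m x) (h1 : ∑ x, m x = 1) :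
    |m ⬝ᵥ v| ≤ ‖v‖ := by
  calc |∑ y, m y * v y| ≤ ∑ y, |m y * v y| := Finset.abs_sum_le_sum_abs _ _
    _ ≤ ∑ y, m y * ‖v‖ := by
        refine Finset.sum_le_sum fun y _ => ?_
        rw [abs_mul, abs_of_nonneg (h0 y)]
        exact mul_le_mul_of_nonneg_left (norm_le_pi_norm v y) (h0 y)
    _ = ‖v‖ := by rw [← Finset.sum_mul, h1, one_mul]

lemma stoch_mulVec_le {T : Type*} [Fintype T] (A : Matrix T T ℝ) (hA : IsStochastic A)
    (v : T → ℝ) : ‖A *ᵥ v‖ ≤ ‖v‖ := by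
  rw [pi_norm_le_iff_of_nonneg (by positivity)]
  intro x
  exact dot_le (A x) v (hA.1 x) (hA.2 x)

lemma prodP_succ {T : Type*} [Fintype T] [DecidableEq T] (P : ℕ → Matrix T T ℝ) (j : ℕ) :
    prodP P (j + 1) = prodP P j * P (j + 1) := by
  simp [prodP, List.range_succ]

lemma prodP_mulVec_le {T : Type*} [Fintype T] [DecidableEq T] (P : ℕ → Matrix T T ℝ)
    (hP : ∀ k, 1 ≤ k → IsStochastic (P k)) (j : ℕ) (v : T → ℝ) :
    ‖prodP P j *ᵥ v‖ ≤ ‖v‖ := by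
  induction j generalizing v with
  | zero => simp [prodP]
  | succ j ih =>
    rw [prodP_succ, ← Matrix.mulVec_mulVec]
    exact (ih _).trans (stoch_mulVec_le _ (hP _ (by omega)) _)

lemma kappa_approx {T : Type*} [Fintype T] [DecidableEq T] (P : ℕ → Matrix T T ℝ)
    (hP : ∀ k, 1 ≤ k → IsStochastic (P k)) (α : ℝ) (hα : 0 < α) (m r : T → ℝ)
    (h0 : ∀ x, 0 ≤ m x) (h1 : ∑ x, m x = 1) (g : ℕ → T → ℝ) (N : ℕ) (K : ℝ) (hK : 0 ≤ K)
    (hg : ∀ j < N, ‖r - (g j - Real.exp (-α) • (P (j + 1) *ᵥ g (j + 1)))‖ ≤ K) :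
    |kappa α m r P - m ⬝ᵥ g 0| ≤
      K / (1 - Real.exp (-α)) +
        Real.exp (-α) ^ N * (‖r‖ / (1 - Real.exp (-α)) + ‖g N‖) := by
  set β := Real.exp (-α) with hβ
  have hβ0 : 0 < β := Real.exp_pos _
  have hβ1 : β < 1 := by rw [hβ, Real.exp_lt_one_iff]; linarith
  have hl : ∀ j v, |m ⬝ᵥ (prodP P j *ᵥ v)| ≤ ‖v‖ := fun j v =>
    (dot_le m _ h0 h1).trans (prodP_mulVec_le P hP j v)
  have hk : kappa α m r P = ∑' j : ℕ, β ^ j * (m ⬝ᵥ (prodP P j *ᵥ r)) := by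
    unfold kappa
    congr 1; ext j
    rw [hβ, ← Real.exp_nat_mul]; congr 2; ring
  have hgeo := summable_geometric_of_lt_one hβ0.le hβ1
  have hb : ∀ j, ‖β ^ j * (m ⬝ᵥ (prodP P j *ᵥ r))‖ ≤ β ^ j * ‖r‖ := fun j => by
    rw [norm_mul, Real.norm_of_nonneg (by positivity)]
    exact mul_le_mul_of_nonneg_left (hl j r) (by positivity)
  have hsum : Summable fun j : ℕ => β ^ j * (m ⬝ᵥ (prodP P j *ᵥ r)) :=
    Summable.of_norm_bounded (hgeo.mul_right ‖r‖) hb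
  have htail : |∑' j : ℕ, β ^ (j + N) * (m ⬝ᵥ (prodP P (j + N) *ᵥ r))| ≤
      β ^ N * (‖r‖ / (1 - β)) := by
    have hh : HasSum (fun j : ℕ => β ^ j * (β ^ N * ‖r‖)) ((1 - β)⁻¹ * (β ^ N * ‖r‖)) :=
      (hasSum_geometric_of_lt_one hβ0.le hβ1).mul_right _
    have := tsum_of_norm_bounded hh (f := fun j : ℕ => β ^ (j + N) * (m ⬝ᵥ (prodP P (j + N) *ᵥ r)))
      (fun j => (hb (j + N)).trans_eq (by ring))
    rw [Real.norm_eq_abs] at this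
    refine this.trans_eq (by rw [div_eq_mul_inv]; ring)
  have htel : ∀ n ≤ N, |∑ j ∈ Finset.range n, β ^ j * (m ⬝ᵥ (prodP P j *ᵥ r)) +
      β ^ n * (m ⬝ᵥ (prodP P n *ᵥ g n)) - m ⬝ᵥ g 0| ≤ ∑ j ∈ Finset.range n, β ^ j * K := by
    intro n hn
    induction n with
    | zero => simp [prodP]
    | succ n ih =>
      have ih' := ih (by omega)
      rw [Finset.sum_range_succ, Finset.sum_range_succ]
      have e : β ^ n * (m ⬝ᵥ (prodP P n *ᵥ (r - (g n - β • (P (n + 1) *ᵥ g (n + 1)))))) =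
          β ^ n * (m ⬝ᵥ (prodP P n *ᵥ r)) - β ^ n * (m ⬝ᵥ (prodP P n *ᵥ g n)) +
          β ^ (n + 1) * (m ⬝ᵥ (prodP P (n + 1) *ᵥ g (n + 1))) := by
        rw [prodP_succ, ← Matrix.mulVec_mulVec]
        simp only [Matrix.mulVec_sub, dotProduct_sub, Matrix.mulVec_smul, dotProduct_smul,
          smul_eq_mul]
        ring
      have hq : |β ^ n * (m ⬝ᵥ (prodP P n *ᵥ (r - (g n - β • (P (n + 1) *ᵥ g (n + 1))))))| ≤
          β ^ n * K := by
        rw [abs_mul, abs_of_nonneg (by positivity : 0 ≤ β ^ n)]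
        exact mul_le_mul_of_nonneg_left ((hl _ _).trans (hg n (by omega))) (by positivity)
      rw [e] at hq
      rw [abs_le] at *
      constructor <;> linarith [ih'.1, ih'.2, hq.1, hq.2]
  have hN := htel N le_rfl
  have hgs : ∑ j ∈ Finset.range N, β ^ j * K ≤ K / (1 - β) := by
    rw [← Finset.sum_mul, div_eq_mul_inv, mul_comm]
    refine mul_le_mul_of_nonneg_left ?_ hK
    rw [← tsum_geometric_of_lt_one hβ0.le hβ1]
    exact hgeo.sum_le_tsum _ (fun _ _ => by positivity)
  have hgN : |β ^ N * (m ⬝ᵥ (prodP P N *ᵥ g N))| ≤ β ^ N * ‖g N‖ := by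
    rw [abs_mul, abs_of_nonneg (by positivity : 0 ≤ β ^ N)]
    exact mul_le_mul_of_nonneg_left (hl _ _) (by positivity)
  rw [hk, ← hsum.sum_add_tsum_nat_add N, mul_add]
  rw [abs_le] at *
  constructor <;> linarith [hN.1, hN.2, hgN.1, hgN.2, htail.1, htail.2]

/-- The limit matrix is a contraction after discounting, so `1 - β • Pt` is invertible. -/
lemma isUnit_aux {T : Type*} [Fintype T] [DecidableEq T] (Pt : Matrix T T ℝ) (β : ℝ)
    (hβ0 : 0 < β) (hβ1 : β < 1)
    (h : ∀ η > 0, ∃ Q : Matrix T T ℝ, IsStochastic Q ∧ matNorm (Q - Pt) ≤ η) :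
    IsUnit (1 - β • Pt) := by
  have hle : ∀ v : T → ℝ, ‖Pt *ᵥ v‖ ≤ ‖v‖ := by
    intro v
    refine le_of_forall_pos_le_add fun η hη => ?_
    obtain ⟨Q, hQ, hn⟩ := h (η / (‖v‖ + 1)) (by positivity)
    have e : Pt *ᵥ v = Q *ᵥ v - (Q - Pt) *ᵥ v := by rw [Matrix.sub_mulVec]; abel
    rw [e]
    refine (norm_sub_le _ _).trans (add_le_add (stoch_mulVec_le Q hQ v) ?_)
    refine (matNorm_mulVec_le _ _).trans ?_
    refine (mul_le_mul_of_nonneg_right hn (norm_nonneg _)).trans ?_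
    rw [div_mul_eq_mul_div, div_le_iff₀ (by positivity)]
    nlinarith [norm_nonneg v]
  rw [← Matrix.mulVec_injective_iff_isUnit]
  intro v v' hv
  have hz : (1 - β • Pt) *ᵥ (v - v') = 0 := by
    rw [Matrix.mulVec_sub]; exact sub_eq_zero.mpr hv
  rw [Matrix.sub_mulVec, Matrix.one_mulVec, Matrix.smul_mulVec, sub_eq_zero] at hz
  have h2 : ‖v - v'‖ ≤ β * ‖v - v'‖ := by
    conv_lhs => rw [hz]
    rw [norm_smul, Real.norm_of_nonneg hβ0.le]
    exact mul_le_mul_of_nonneg_left (hle _) hβ0.le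
  have h3 : ‖v - v'‖ = 0 := by nlinarith [norm_nonneg (v - v')]
  exact sub_eq_zero.mp (norm_eq_zero.mp h3)

lemma small_aux (c s η x : ℝ) (hη : 0 < η) :
    ∃ t, x < t ∧ c * Real.exp (-t) ^ 2 * t ^ s ≤ η := by
  have h := (tendsto_rpow_mul_exp_neg_mul_atTop_nhds_zero s 2 (by norm_num)).const_mul c
  rw [mul_zero] at h
  obtain ⟨t, ht, h2⟩ := ((eventually_gt_atTop x).and (h.eventually (gt_mem_nhds hη))).exists
  refine ⟨t, ht, ?_⟩
  have : Real.exp (-t) ^ 2 = Real.exp (-2 * t) := by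
    rw [← Real.exp_nat_mul]; congr 1; push_cast; ring
  rw [this]
  linarith

set_option maxHeartbeats 2000000 in
/-- Under Assumption 1 with a_{i1} = i − 1, there exists w < ∞ such that
κ(ε) = μ(I − e^{−α}P̃)⁻¹ r + ε e^{−2α} μ P̃ (I − e^{−α}P̃)⁻² P̃⁽¹⁾ (I − e^{−α}P̃)⁻¹ r
        + O(ε²(log(1/ε))^w) as ε ↓ 0. -/
theorem discounted_reward_first_order_linear_drift
    {S : Type*} [Fintype S] [Nonempty S] [DecidableEq S]
    (P : ℕ → ℝ → Matrix S S ℝ) (a : ℕ → ℝ) (Pt Pt1 : Matrix S S ℝ)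
    (s δ p : ℝ) (hδ : 0 < δ) (hp : 0 < p)
    (ha : ∀ i : ℕ, 1 ≤ i → a i = (i : ℝ) - 1)
    (hstoch : ∀ k : ℕ, 1 ≤ k → ∀ ε : ℝ, 0 < ε → IsStochastic (P k ε))
    (hi : ∃ c > (0:ℝ), ∃ ε₀ > (0:ℝ), ∀ ε : ℝ, 0 < ε → ε < ε₀ →
      ∀ i : ℕ, 1 ≤ i → (i : ℝ) ≤ Real.log (1/ε) ^ (1 + δ) →
        matNorm (P i ε - (Pt + (ε * a i) • Pt1)) ≤ c * ε ^ 2 * Real.log (1/ε) ^ s)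
    (hii : ∃ c > (0:ℝ), ∃ i₀ : ℕ, ∀ i : ℕ, i₀ ≤ i → |a i| ≤ c * (i : ℝ) ^ p)
    (α : ℝ) (hα : 0 < α)
    (μ r : S → ℝ) (hμ0 : ∀ x, 0 ≤ μ x) (hμ1 : ∑ x, μ x = 1) :
    ∃ w : ℝ, ∃ c > (0:ℝ), ∃ ε₁ > (0:ℝ), ∀ ε : ℝ, 0 < ε → ε < ε₁ →
      |kappa α μ r (fun k => P k ε) -
          (μ ⬝ᵥ ((1 - Real.exp (-α) • Pt)⁻¹ *ᵥ r) +
            ε * Real.exp (-(2 * α)) *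
              (μ ⬝ᵥ ((Pt * ((1 - Real.exp (-α) • Pt)⁻¹) ^ 2 * Pt1 *
                  (1 - Real.exp (-α) • Pt)⁻¹) *ᵥ r)))|
        ≤ c * ε ^ 2 * Real.log (1/ε) ^ w := by
  obtain ⟨c₀, hc₀, ε₀, hε₀, hP⟩ := hi
  set β := Real.exp (-α) with hβ
  have hβ0 : 0 < β := Real.exp_pos _
  have hβ1 : β < 1 := by rw [hβ, Real.exp_lt_one_iff]; linarith
  have hunit : IsUnit (1 - β • Pt) := by
    refine isUnit_aux Pt β hβ0 hβ1 fun η hη => ?_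
    obtain ⟨t, ht, h2⟩ := small_aux c₀ s η (max 1 (-Real.log ε₀)) hη
    have ht1 : 1 < t := (le_max_left _ _).trans_lt ht
    have ht2 : -Real.log ε₀ < t := (le_max_right _ _).trans_lt ht
    have hL : Real.log (1 / Real.exp (-t)) = t := by
      rw [one_div, ← Real.exp_neg, neg_neg, Real.log_exp]
    refine ⟨P 1 (Real.exp (-t)), hstoch 1 le_rfl _ (Real.exp_pos _), ?_⟩
    have h3 := hP (Real.exp (-t)) (Real.exp_pos _)
      (by rw [← Real.lt_log_iff_exp_lt hε₀]; linarith) 1 le_rfl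
      (by rw [hL]; push_cast; exact Real.one_le_rpow ht1.le (by linarith))
    rw [hL, ha 1 le_rfl] at h3
    simp only [Nat.cast_one, sub_self, mul_zero, zero_smul, add_zero] at h3
    exact h3.trans h2
  set M := 1 - β • Pt with hM
  have hdet : IsUnit M.det := (Matrix.isUnit_iff_isUnit_det _).mp hunit
  have hMR : M * M⁻¹ = 1 := Matrix.mul_nonsing_inv _ hdet
  have hRM : M⁻¹ * M = 1 := Matrix.nonsing_inv_mul _ hdet
  set R := M⁻¹ with hR
  have hsolve : ∀ v : S → ℝ, R *ᵥ v - β • (Pt *ᵥ (R *ᵥ v)) = v := by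
    intro v
    have : M *ᵥ (R *ᵥ v) = v := by rw [Matrix.mulVec_mulVec, hMR, Matrix.one_mulVec]
    rwa [hM, Matrix.sub_mulVec, Matrix.one_mulVec, Matrix.smul_mulVec] at this
  have hcomm : R * Pt = Pt * R := by
    have h1 : M * Pt = Pt * M := by simp [hM, sub_mul, mul_sub]
    calc R * Pt = R * (Pt * (M * R)) := by rw [hMR, mul_one]
      _ = R * (Pt * M) * R := by simp only [mul_assoc]
      _ = R * (M * Pt) * R := by rw [h1]
      _ = (R * M) * Pt * R := by simp only [mul_assoc]
      _ = Pt * R := by rw [hRM, one_mul]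
  set U : S → ℝ := R *ᵥ r with hU
  set A : S → ℝ := R *ᵥ (β • (Pt1 *ᵥ U)) with hA
  set B : S → ℝ := R *ᵥ (β • (Pt *ᵥ A)) with hB
  have eU : U - β • (Pt *ᵥ U) = r := hsolve _
  have eA : A - β • (Pt *ᵥ A) = β • (Pt1 *ᵥ U) := hsolve _
  have eB : B - β • (Pt *ᵥ B) = β • (Pt *ᵥ A) := hsolve _
  have hmain : ∀ ε : ℝ, μ ⬝ᵥ U + ε * Real.exp (-(2 * α)) *
      (μ ⬝ᵥ ((Pt * R ^ 2 * Pt1 * R) *ᵥ r)) = μ ⬝ᵥ (U + ε • B) := by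
    intro ε
    have hb2 : Real.exp (-(2 * α)) = β * β := by
      rw [hβ, ← Real.exp_add]; congr 1; ring
    have : B = (β * β) • ((Pt * R ^ 2 * Pt1 * R) *ᵥ r) := by
      rw [hB, hA, hU]
      simp only [Matrix.mulVec_smul, Matrix.mulVec_mulVec, smul_smul]
      congr 2
      calc R * (Pt * (R * (Pt1 * R))) = (R * Pt) * R * Pt1 * R := by simp only [mul_assoc]
        _ = _ := by rw [hcomm, pow_two]; simp only [mul_assoc]
    rw [this, hb2, dotProduct_add, dotProduct_smul, dotProduct_smul, smul_eq_mul, smul_eq_mul]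
    ring
  set C : ℝ := ‖A‖ + ‖B‖ with hC
  have hC0 : 0 ≤ C := by positivity
  set n1 := matNorm Pt1 with hn1
  have hn10 : 0 ≤ n1 := matNorm_nonneg _
  set w : ℝ := |s| + 2 * (1 + δ) with hw
  set K0 : ℝ := c₀ * (‖U‖ + C) + n1 * C with hK0
  have hK00 : 0 ≤ K0 := by positivity
  set c1 : ℝ := K0 / (1 - β) + Real.exp α * (‖r‖ / (1 - β) + (‖U‖ + C)) with hc1
  have h1β : 0 < 1 - β := by linarith
  have hc10 : 0 ≤ c1 := by positivity
  set T : ℝ := max 1 ((2 / α) ^ (1 / δ)) with hT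
  refine ⟨w, c1 + 1, by positivity, min ε₀ (Real.exp (-T)), lt_min hε₀ (Real.exp_pos _), ?_⟩
  intro ε hε hε1
  have hεε₀ : ε < ε₀ := hε1.trans_le (min_le_left _ _)
  have hεT : ε < Real.exp (-T) := hε1.trans_le (min_le_right _ _)
  have hεle : ε ≤ 1 := by
    refine hεT.le.trans ?_
    rw [Real.exp_le_one_iff]
    have : 1 ≤ T := le_max_left _ _
    linarith
  have hPε := hP ε hε hεε₀
  set L := Real.log (1 / ε) with hLdef
  have hLε : Real.exp (-L) = ε := by
    rw [hLdef, one_div, Real.log_inv, neg_neg, Real.exp_log hε]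
  have hLT : T < L := by
    rw [← hLε, Real.exp_lt_exp] at hεT; linarith
  have hL1 : 1 ≤ L := (le_max_left _ _).trans hLT.le
  have hL0 : 0 < L := by linarith
  have hLδ : 2 ≤ α * L ^ δ := by
    have h2 : (2 / α) ^ (1 / δ) ≤ L := (le_max_right _ _).trans hLT.le
    have h3 := Real.rpow_le_rpow (by positivity) h2 hδ.le
    rw [← Real.rpow_mul (by positivity), one_div_mul_cancel hδ.ne', Real.rpow_one,
      div_le_iff₀ hα] at h3
    linarith
  set m := L ^ (1 + δ) with hm
  have hm1 : 1 ≤ m := Real.one_le_rpow hL1 (by linarith)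
  have hmL : m = L * L ^ δ := by rw [hm, Real.rpow_add hL0, Real.rpow_one]
  set N := ⌊m⌋₊ with hN
  have hNm : (N : ℝ) ≤ m := Nat.floor_le (by linarith)
  have hNm' : m < N + 1 := Nat.lt_floor_add_one m
  have hmm : m * m ≤ L ^ w := by
    rw [hm, ← Real.rpow_add hL0]
    refine Real.rpow_le_rpow_of_exponent_le hL1 ?_
    rw [hw]; linarith [abs_nonneg s]
  have hsm : L ^ s * m ≤ L ^ w := by
    rw [hm, ← Real.rpow_add hL0]
    refine Real.rpow_le_rpow_of_exponent_le hL1 ?_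
    rw [hw]; linarith [le_abs_self s]
  have hmw : m ≤ L ^ w := by nlinarith
  have hLs0 : 0 < L ^ s := Real.rpow_pos_of_pos hL0 s
  have hLw0 : 0 < L ^ w := Real.rpow_pos_of_pos hL0 w
  have hβN : β ^ N ≤ Real.exp α * ε ^ 2 := by
    rw [hβ, ← Real.exp_nat_mul, ← hLε, ← Real.exp_nat_mul, ← Real.exp_add, Real.exp_le_exp]
    push_cast
    have : L * 2 ≤ L * (α * L ^ δ) := mul_le_mul_of_nonneg_left hLδ hL0.le
    have h4 : α * m = L * (α * L ^ δ) := by rw [hmL]; ring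
    nlinarith
  set W : ℕ → S → ℝ := fun k => (k : ℝ) • A + B with hW
  set g : ℕ → S → ℝ := fun k => U + ε • W k with hg
  have hWn : ∀ k : ℕ, (k : ℝ) ≤ m → ‖W k‖ ≤ m * C := by
    intro k hk
    refine (norm_add_le _ _).trans ?_
    rw [norm_smul, Real.norm_of_nonneg (Nat.cast_nonneg k), hC]
    nlinarith [norm_nonneg A, norm_nonneg B]
  have hgn : ∀ k : ℕ, (k : ℝ) ≤ m → ‖g k‖ ≤ (‖U‖ + C) * m := by
    intro k hk
    refine (norm_add_le _ _).trans ?_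
    rw [norm_smul, Real.norm_of_nonneg hε.le]
    have h5 := hWn k hk
    have h6 : ε * ‖W k‖ ≤ 1 * ‖W k‖ := mul_le_mul_of_nonneg_right hεle (norm_nonneg _)
    nlinarith [norm_nonneg U]
  have hg0 : g 0 = U + ε • B := by simp [hg, hW]
  have hres : ∀ j < N, ‖r - (g j - β • (P (j + 1) ε *ᵥ g (j + 1)))‖ ≤ K0 * ε ^ 2 * L ^ w := by
    intro j hj
    have hj1 : ((j + 1 : ℕ) : ℝ) ≤ m := by
      refine le_trans ?_ hNm
      exact_mod_cast hj
    have hjm : (j : ℝ) ≤ m := by push_cast at hj1; linarith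
    have hE := hPε (j + 1) (by omega) hj1
    rw [ha (j + 1) (by omega)] at hE
    have hcast : ((j + 1 : ℕ) : ℝ) - 1 = j := by push_cast; ring
    rw [hcast] at hE
    set E := P (j + 1) ε - (Pt + (ε * (j : ℝ)) • Pt1) with hEdef
    have hPE : P (j + 1) ε = Pt + (ε * (j : ℝ)) • Pt1 + E := by rw [hEdef]; abel
    have hid : r - (g j - β • (P (j + 1) ε *ᵥ g (j + 1))) =
        β • (E *ᵥ g (j + 1) + (ε ^ 2 * (j : ℝ)) • (Pt1 *ᵥ W (j + 1))) := by
      rw [hPE]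
      simp only [hg, Matrix.add_mulVec, Matrix.smul_mulVec]
      generalize E *ᵥ (U + ε • W (j + 1)) = z
      simp only [Matrix.mulVec_add, Matrix.mulVec_smul]
      generalize hq : Pt1 *ᵥ W (j + 1) = z2
      simp only [hW, Matrix.mulVec_add, Matrix.mulVec_smul]
      ext x
      have eUx := congrFun eU x
      have eAx := congrFun eA x
      have eBx := congrFun eB x
      simp only [Pi.add_apply, Pi.sub_apply, Pi.smul_apply, smul_eq_mul] at eUx eAx eBx ⊢
      push_cast
      linear_combination (-1) * eUx - ε * j * eAx - ε * eBx
    rw [hid, norm_smul, Real.norm_of_nonneg hβ0.le]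
    have h7 : ‖E *ᵥ g (j + 1)‖ ≤ (c₀ * ε ^ 2 * L ^ s) * ((‖U‖ + C) * m) :=
      (matNorm_mulVec_le _ _).trans
        (mul_le_mul hE (hgn _ hj1) (norm_nonneg _) (by positivity))
    have h8 : ‖(ε ^ 2 * (j : ℝ)) • (Pt1 *ᵥ W (j + 1))‖ ≤ (ε ^ 2 * m) * (n1 * (m * C)) := by
      rw [norm_smul, Real.norm_of_nonneg (by positivity)]
      refine mul_le_mul (mul_le_mul_of_nonneg_left hjm (by positivity)) ?_ (norm_nonneg _)
        (by positivity)
      exact (matNorm_mulVec_le _ _).trans (mul_le_mul_of_nonneg_left (hWn _ hj1) hn10)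
    calc β * ‖E *ᵥ g (j + 1) + (ε ^ 2 * (j : ℝ)) • (Pt1 *ᵥ W (j + 1))‖
        ≤ 1 * ‖E *ᵥ g (j + 1) + (ε ^ 2 * (j : ℝ)) • (Pt1 *ᵥ W (j + 1))‖ :=
          mul_le_mul_of_nonneg_right hβ1.le (norm_nonneg _)
      _ ≤ (c₀ * ε ^ 2 * L ^ s) * ((‖U‖ + C) * m) + (ε ^ 2 * m) * (n1 * (m * C)) := by
          rw [one_mul]; exact (norm_add_le _ _).trans (add_le_add h7 h8)
      _ = (c₀ * (‖U‖ + C) * ε ^ 2) * (L ^ s * m) + (n1 * C * ε ^ 2) * (m * m) := by ring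
      _ ≤ (c₀ * (‖U‖ + C) * ε ^ 2) * L ^ w + (n1 * C * ε ^ 2) * L ^ w :=
          add_le_add (mul_le_mul_of_nonneg_left hsm (by positivity))
            (mul_le_mul_of_nonneg_left hmm (by positivity))
      _ = K0 * ε ^ 2 * L ^ w := by rw [hK0]; ring
  have hfin := kappa_approx (fun k => P k ε) (fun k hk => hstoch k hk ε hε) α hα μ r hμ0 hμ1
    g N (K0 * ε ^ 2 * L ^ w) (by positivity) hres
  rw [hmain, ← hg0]
  refine hfin.trans ?_
  rw [← hβ]
  have h9 : ‖r‖ / (1 - β) + ‖g N‖ ≤ (‖r‖ / (1 - β) + (‖U‖ + C)) * L ^ w := by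
    have h10 := hgn N hNm
    have h11 : (‖U‖ + C) * m ≤ (‖U‖ + C) * L ^ w := mul_le_mul_of_nonneg_left hmw (by positivity)
    have h12 : ‖r‖ / (1 - β) * 1 ≤ ‖r‖ / (1 - β) * L ^ w :=
      mul_le_mul_of_nonneg_left (hm1.trans hmw) (by positivity)
    linarith
  calc K0 * ε ^ 2 * L ^ w / (1 - β) + β ^ N * (‖r‖ / (1 - β) + ‖g N‖)
      ≤ K0 * ε ^ 2 * L ^ w / (1 - β) +
        (Real.exp α * ε ^ 2) * ((‖r‖ / (1 - β) + (‖U‖ + C)) * L ^ w) :=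
        add_le_add le_rfl (mul_le_mul hβN h9 (by positivity) (by positivity))
    _ = c1 * ε ^ 2 * L ^ w := by rw [hc1]; ring
    _ ≤ (c1 + 1) * ε ^ 2 * L ^ w := by
        have : 0 ≤ ε ^ 2 * L ^ w := by positivity
        nlinarith
end

section
/- Suppose Assumption 2 holds. Then P̃ is stochastic, and there exists w < ∞ such that κ(ε) = μ(I − e^{−α}P̃)^{−1} r + ε e^{−α} μ Σ_{k=0}^∞ a_{k+1,1} e^{−αk} P̃^k P̃⁽¹⁾ (I − e^{−α}P̃)^{−1} r + (ε²/2) e^{−α} μ Σ_{k=0}^∞ a_{k+1,2} e^{−αk} P̃^k P̃⁽²⁾ (I − e^{−α}P̃)^{−1} r + ε² e^{−2α} μ Σ_{k=1}^∞ a_{k1} e^{−α(k−1)} P̃^{k−1} P̃⁽¹⁾ (Σ_{l=k+1}^∞ a_{l1} e^{−α(l−k−1)} P̃^{l−k−1}) P̃⁽¹⁾ (I − e^{−α}P̃)^{−1} r + O(ε³(log(1/ε))^w) as ε↓0, all the displayed series being absolutely convergent. -/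
open Matrix Topology Filter

set_option linter.unusedSectionVars false

section Core
variable {A : Type*} [NormedRing A] [NormedAlgebra ℝ A] [CompleteSpace A] [NormOneClass A]

theorem core_pow_le {Pt : A} (hPt : ‖Pt‖ ≤ 1) (k : ℕ) : ‖Pt ^ k‖ ≤ 1 :=
  (norm_pow_le Pt k).trans (pow_le_one₀ (norm_nonneg _) hPt)

/-- Weighted sums with exponentially controlled terms are summable. -/
theorem core_summable {β q c : ℝ} (hβ : 0 < β) (hq : 0 < q) (hβq : β * q < 1)
    {f : ℕ → A} (hf : ∀ i, ‖f i‖ ≤ c * q ^ i) : Summable (fun i => β ^ i • f i) := by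
  refine Summable.of_norm_bounded (g := fun i => c * (β * q) ^ i)
    ((summable_geometric_of_lt_one (by positivity) hβq).mul_left c) ?_
  intro i
  rw [norm_smul, Real.norm_of_nonneg (by positivity), mul_pow]
  calc β ^ i * ‖f i‖ ≤ β ^ i * (c * q ^ i) := by gcongr; exact hf i
    _ = _ := by ring

theorem core_tsum_le {β q c : ℝ} (hβ : 0 < β) (hq : 0 < q) (hβq : β * q < 1)
    {f : ℕ → A} (hf : ∀ i, ‖f i‖ ≤ c * q ^ i) :
    ‖∑' i, β ^ i • f i‖ ≤ c * (1 - β * q)⁻¹ := by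
  refine tsum_of_norm_bounded (g := fun i => c * (β * q) ^ i)
    ((hasSum_geometric_of_lt_one (by positivity) hβq).mul_left c) ?_
  intro i
  rw [norm_smul, Real.norm_of_nonneg (by positivity), mul_pow]
  calc β ^ i * ‖f i‖ ≤ β ^ i * (c * q ^ i) := by gcongr; exact hf i
    _ = _ := by ring

/-- First order correction coefficients. -/
noncomputable def coreF (Pt P1 : A) (a : ℕ → ℝ) : ℕ → A
  | 0 => 0
  | i + 1 => coreF Pt P1 a i * Pt + a i • (Pt ^ i * P1)

theorem coreF_le {Pt P1 : A} {a : ℕ → ℝ} {ρ c d : ℝ} (hPt : ‖Pt‖ ≤ 1)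
    (hd : 0 ≤ d) (hdρ : 1 + d = ρ * d) (hc : 0 ≤ c)
    (ha : ∀ i, |a i| * ‖P1‖ ≤ c * ρ ^ i) (i : ℕ) :
    ‖coreF Pt P1 a i‖ ≤ c * d * ρ ^ i := by
  induction i with
  | zero => simp only [coreF, norm_zero, pow_zero]; positivity
  | succ i ih =>
    have h1 : ‖coreF Pt P1 a i * Pt‖ ≤ c * d * ρ ^ i :=
      (norm_mul_le _ _).trans ((mul_le_of_le_one_right (norm_nonneg _) hPt).trans ih)
    have h2 : ‖a i • (Pt ^ i * P1)‖ ≤ c * ρ ^ i := by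
      rw [norm_smul, Real.norm_eq_abs]
      refine le_trans ?_ (ha i)
      gcongr
      exact (norm_mul_le _ _).trans
        (mul_le_of_le_one_left (norm_nonneg _) (core_pow_le hPt i))
    calc ‖coreF Pt P1 a (i+1)‖ ≤ c * d * ρ ^ i + c * ρ ^ i := by
          simp only [coreF]; exact (norm_add_le _ _).trans (add_le_add h1 h2)
      _ = c * ρ ^ i * (1 + d) := by ring
      _ = _ := by rw [hdρ]; ring

theorem core_D {Pt : A} {M e : ℕ → A} {ρ c d ε : ℝ} (hPt : ‖Pt‖ ≤ 1)
    (hd : 0 ≤ d) (hdρ : 1 + d = ρ * d) (hc : 0 ≤ c) (hε : 0 < ε)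
    (hM0 : M 0 = 1) (hM : ∀ i, M (i+1) = M i * (Pt + e i)) (hM1 : ∀ i, ‖M i‖ ≤ 1)
    (h1 : ∀ i, ‖e i‖ ≤ c * ε * ρ ^ i) (i : ℕ) :
    ‖M i - Pt ^ i‖ ≤ c * d * ε * ρ ^ i := by
  induction i with
  | zero => simp only [hM0, pow_zero, sub_self, norm_zero]; positivity
  | succ i ih =>
    have h : M (i+1) - Pt ^ (i+1) = (M i - Pt ^ i) * Pt + M i * e i := by
      rw [hM, pow_succ]; noncomm_ring
    have h2 : ‖(M i - Pt ^ i) * Pt‖ ≤ c * d * ε * ρ ^ i :=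
      (norm_mul_le _ _).trans ((mul_le_of_le_one_right (norm_nonneg _) hPt).trans ih)
    have h3 : ‖M i * e i‖ ≤ c * ε * ρ ^ i :=
      (norm_mul_le _ _).trans ((mul_le_of_le_one_left (norm_nonneg _) (hM1 i)).trans (h1 i))
    rw [h]
    calc _ ≤ c * d * ε * ρ ^ i + c * ε * ρ ^ i := (norm_add_le _ _).trans (add_le_add h2 h3)
      _ = c * ε * ρ ^ i * (1 + d) := by ring
      _ = _ := by rw [hdρ]; ring

theorem core_DF {Pt P1 : A} {a : ℕ → ℝ} {M e : ℕ → A} {ρ c d ε : ℝ} (hPt : ‖Pt‖ ≤ 1)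
    (hρ : 1 ≤ ρ) (hd : 0 ≤ d) (hdρ : 1 + d = ρ * d) (hc : 0 ≤ c) (hε : 0 < ε)
    (hM0 : M 0 = 1) (hM : ∀ i, M (i+1) = M i * (Pt + e i)) (hM1 : ∀ i, ‖M i‖ ≤ 1)
    (h1 : ∀ i, ‖e i‖ ≤ c * ε * ρ ^ i)
    (h2 : ∀ i, ‖e i - (ε * a i) • P1‖ ≤ c * ε ^ 2 * ρ ^ i) (i : ℕ) :
    ‖M i - Pt ^ i - ε • coreF Pt P1 a i‖ ≤ (c ^ 2 * d + c) * d * ε ^ 2 * (ρ ^ i) ^ 2 := by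
  induction i with
  | zero => simp only [hM0, coreF, pow_zero, sub_self, smul_zero, norm_zero]; positivity
  | succ i ih =>
    have hρi : 1 ≤ ρ ^ i := one_le_pow₀ hρ
    have h : M (i+1) - Pt ^ (i+1) - ε • coreF Pt P1 a (i+1)
        = (M i - Pt ^ i - ε • coreF Pt P1 a i) * Pt
          + ((M i - Pt ^ i) * e i + Pt ^ i * (e i - (ε * a i) • P1)) := by
      rw [hM, pow_succ]
      simp only [coreF, smul_add, mul_smul, mul_sub, sub_mul, mul_add, smul_mul_assoc,
        mul_smul_comm]
      abel
    have h3 : ‖(M i - Pt ^ i - ε • coreF Pt P1 a i) * Pt‖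
        ≤ (c ^ 2 * d + c) * d * ε ^ 2 * (ρ ^ i) ^ 2 :=
      (norm_mul_le _ _).trans ((mul_le_of_le_one_right (norm_nonneg _) hPt).trans ih)
    have h4 : ‖(M i - Pt ^ i) * e i‖ ≤ (c * d * ε * ρ ^ i) * (c * ε * ρ ^ i) :=
      (norm_mul_le _ _).trans (mul_le_mul (core_D hPt hd hdρ hc hε hM0 hM hM1 h1 i) (h1 i)
        (norm_nonneg _) (by positivity))
    have h5 : ‖Pt ^ i * (e i - (ε * a i) • P1)‖ ≤ c * ε ^ 2 * ρ ^ i :=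
      (norm_mul_le _ _).trans ((mul_le_of_le_one_left (norm_nonneg _) (core_pow_le hPt i)).trans
        (h2 i))
    have h6 : c * ε ^ 2 * ρ ^ i ≤ c * ε ^ 2 * (ρ ^ i) ^ 2 := by
      gcongr; nlinarith
    rw [h]
    calc _ ≤ (c ^ 2 * d + c) * d * ε ^ 2 * (ρ ^ i) ^ 2
          + ((c * d * ε * ρ ^ i) * (c * ε * ρ ^ i) + c * ε ^ 2 * (ρ ^ i) ^ 2) :=
          (norm_add_le _ _).trans (add_le_add h3
            ((norm_add_le _ _).trans (add_le_add h4 (h5.trans h6))))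
      _ = (c ^ 2 * d + c) * (1 + d) * ε ^ 2 * (ρ ^ i) ^ 2 := by ring
      _ = (c ^ 2 * d + c) * d * ε ^ 2 * (ρ ^ i) ^ 2 * ρ := by rw [hdρ]; ring
      _ ≤ (c ^ 2 * d + c) * d * ε ^ 2 * (ρ ^ i) ^ 2 * ρ ^ 2 := by
          gcongr; nlinarith
      _ = _ := by ring

theorem core_term {Pt P1 P2 : A} {a b : ℕ → ℝ} {M e : ℕ → A} {ρ c d ε η : ℝ} (hPt : ‖Pt‖ ≤ 1)
    (hρ : 1 ≤ ρ) (hd : 0 ≤ d) (hdρ : 1 + d = ρ * d) (hc : 0 ≤ c) (hε : 0 < ε)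
    (hη : ε ^ 3 ≤ η)
    (hM0 : M 0 = 1) (hM : ∀ i, M (i+1) = M i * (Pt + e i)) (hM1 : ∀ i, ‖M i‖ ≤ 1)
    (ha : ∀ i, |a i| * ‖P1‖ ≤ c * ρ ^ i)
    (h1 : ∀ i, ‖e i‖ ≤ c * ε * ρ ^ i)
    (h2 : ∀ i, ‖e i - (ε * a i) • P1‖ ≤ c * ε ^ 2 * ρ ^ i)
    (h3 : ∀ i, ‖e i - ((ε * a i) • P1 + (ε ^ 2 / 2 * b i) • P2)‖ ≤ c * η * ρ ^ i) (i : ℕ) :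
    ‖M i * e i - (ε • (a i • (Pt ^ i * P1)) + (ε ^ 2 / 2) • (b i • (Pt ^ i * P2))
      + ε ^ 2 • (a i • (coreF Pt P1 a i * P1)))‖
      ≤ (c + c * d * c + (c ^ 2 * d + c) * d * c) * η * (ρ ^ 3) ^ i := by
  have hρi : 1 ≤ ρ ^ i := one_le_pow₀ hρ
  have hη0 : 0 < η := lt_of_lt_of_le (by positivity) hη
  have h : M i * e i - (ε • (a i • (Pt ^ i * P1)) + (ε ^ 2 / 2) • (b i • (Pt ^ i * P2))
      + ε ^ 2 • (a i • (coreF Pt P1 a i * P1)))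
      = Pt ^ i * (e i - ((ε * a i) • P1 + (ε ^ 2 / 2 * b i) • P2))
        + (ε • coreF Pt P1 a i) * (e i - (ε * a i) • P1)
        + (M i - Pt ^ i - ε • coreF Pt P1 a i) * e i := by
    simp only [mul_smul, mul_sub, sub_mul, mul_add, smul_mul_assoc,
        mul_smul_comm, pow_two ε, smul_comm (a i) ε]
    abel
  have e1 : ‖Pt ^ i * (e i - ((ε * a i) • P1 + (ε ^ 2 / 2 * b i) • P2))‖ ≤ c * η * ρ ^ i :=
    (norm_mul_le _ _).trans ((mul_le_of_le_one_left (norm_nonneg _) (core_pow_le hPt i)).trans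
        (h3 i))
  have e2 : ‖(ε • coreF Pt P1 a i) * (e i - (ε * a i) • P1)‖
      ≤ (ε * (c * d * ρ ^ i)) * (c * ε ^ 2 * ρ ^ i) := by
    refine (norm_mul_le _ _).trans (mul_le_mul ?_ (h2 i) (norm_nonneg _) (by positivity))
    rw [norm_smul, Real.norm_of_nonneg hε.le]
    gcongr
    exact coreF_le hPt hd hdρ hc ha i
  have e3 : ‖(M i - Pt ^ i - ε • coreF Pt P1 a i) * e i‖
      ≤ ((c ^ 2 * d + c) * d * ε ^ 2 * (ρ ^ i) ^ 2) * (c * ε * ρ ^ i) :=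
    (norm_mul_le _ _).trans (mul_le_mul (core_DF hPt hρ hd hdρ hc hε hM0 hM hM1 h1 h2 i) (h1 i)
        (norm_nonneg _) (by positivity))
  have p1 : ρ ^ i ≤ (ρ ^ i) ^ 3 := le_self_pow₀ hρi (by norm_num)
  have p2 : (ρ ^ i) ^ 2 ≤ (ρ ^ i) ^ 3 := pow_le_pow_right₀ hρi (by norm_num)
  rw [h, show (ρ ^ 3) ^ i = (ρ ^ i) ^ 3 by ring]
  calc _ ≤ c * η * ρ ^ i + (ε * (c * d * ρ ^ i)) * (c * ε ^ 2 * ρ ^ i)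
        + ((c ^ 2 * d + c) * d * ε ^ 2 * (ρ ^ i) ^ 2) * (c * ε * ρ ^ i) :=
        (norm_add_le _ _).trans (add_le_add ((norm_add_le _ _).trans (add_le_add e1 e2)) e3)
    _ = c * η * ρ ^ i + c * d * c * ε ^ 3 * (ρ ^ i) ^ 2
        + (c ^ 2 * d + c) * d * c * ε ^ 3 * (ρ ^ i) ^ 3 := by ring
    _ ≤ c * η * (ρ ^ i) ^ 3 + c * d * c * η * (ρ ^ i) ^ 3
        + (c ^ 2 * d + c) * d * c * η * (ρ ^ i) ^ 3 := by gcongr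
    _ = _ := by ring

/-- Resolvent identity for the discounted sum. -/
theorem core_resolvent {Pt G : A} {M e : ℕ → A} {β : ℝ}
    (hG : (1 - β • Pt) * G = 1)
    (hM0 : M 0 = 1) (hM : ∀ i, M (i+1) = M i * (Pt + e i))
    (hs : Summable (fun i => β ^ i • M i)) :
    ∑' i, β ^ i • M i = G + β • ((∑' i, β ^ i • (M i * e i)) * G) := by
  set K := ∑' i, β ^ i • M i with hK
  have hs' := (summable_nat_add_iff 1).2 hs
  have hX : Summable (fun i => β ^ (i+1) • (M i * e i)) := by
    have : (fun i => β ^ (i+1) • (M i * e i))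
        = fun i => β ^ (i+1) • M (i+1) - β • ((β ^ i • M i) * Pt) := by
      funext i
      rw [hM, mul_add, smul_add, pow_succ', mul_smul, mul_smul, smul_mul_assoc]
      abel
    rw [this]
    exact hs'.sub ((hs.mul_right Pt).const_smul β)
  have h1 : K = 1 + ∑' i, β ^ (i+1) • M (i+1) := by
    rw [hK, hs.tsum_eq_zero_add, hM0, pow_zero, one_smul]
  have h2 : ∑' i, β ^ (i+1) • M (i+1)
      = β • (K * Pt) + ∑' i, β ^ (i+1) • (M i * e i) := by
    rw [hK, ← hs.tsum_mul_right, ← (hs.mul_right Pt).tsum_const_smul,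
      ← ((hs.mul_right Pt).const_smul β).tsum_add hX]
    congr 1; funext i
    rw [hM, mul_add, smul_add, pow_succ', mul_smul, mul_smul, smul_mul_assoc]
  have h3 : ∑' i, β ^ (i+1) • (M i * e i) = β • ∑' i, β ^ i • (M i * e i) := by
    rw [← tsum_const_smul'']
    congr 1; funext i; rw [pow_succ', mul_smul]
  have h4 : K * (1 - β • Pt) = 1 + β • ∑' i, β ^ i • (M i * e i) := by
    rw [mul_sub, mul_one, mul_smul_comm, ← h3]
    nth_rewrite 1 [h1]
    rw [h2]; abel
  calc K = K * ((1 - β • Pt) * G) := by rw [hG, mul_one]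
    _ = _ := by rw [← mul_assoc, h4, add_mul, one_mul, smul_mul_assoc]

/-- Rearrangement of the double sum by telescoping. -/
theorem core_telescope {Pt P1 : A} {a : ℕ → ℝ} {β ρ c d : ℝ} (hPt : ‖Pt‖ ≤ 1)
    (hρ : 1 < ρ) (hd : 0 ≤ d) (hdρ : 1 + d = ρ * d) (hc : 0 ≤ c)
    (hβ : 0 < β) (hβρ : β * ρ ^ 3 < 1)
    (ha0 : ∀ i, |a i| ≤ c * ρ ^ i)
    (ha : ∀ i, |a i| * ‖P1‖ ≤ c * ρ ^ i) :
    Summable (fun u => β ^ u • (a u • (Pt ^ u * P1 * ∑' j, β ^ j • (a (u + 1 + j) • Pt ^ j)))) ∧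
    Summable (fun i => β ^ i • (a i • coreF Pt P1 a i)) ∧
    ∑' i, β ^ i • (a i • coreF Pt P1 a i) =
      β • ∑' u, β ^ u • (a u • (Pt ^ u * P1 * ∑' j, β ^ j • (a (u + 1 + j) • Pt ^ j))) := by
  have hρ0 : 0 < ρ := by linarith
  have hβ1 : β * ρ < 1 := lt_of_le_of_lt (by gcongr; exact le_self_pow₀ hρ.le (by norm_num)) hβρ
  have hβ2 : β * ρ ^ 2 < 1 :=
    lt_of_le_of_lt (by gcongr; exacts [hρ.le, by norm_num]) hβρ
  have hterm : ∀ u j, ‖a (u + j) • Pt ^ j‖ ≤ (c * ρ ^ u) * ρ ^ j := fun u j => by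
    rw [norm_smul, Real.norm_eq_abs, mul_assoc, ← pow_add]
    exact (mul_le_of_le_one_right (abs_nonneg _) (core_pow_le hPt j)).trans (ha0 _)
  set T : ℕ → A := fun u => ∑' j, β ^ j • (a (u + j) • Pt ^ j) with hT
  have hTle : ∀ u, ‖T u‖ ≤ c * ρ ^ u * (1 - β * ρ)⁻¹ := fun u =>
    core_tsum_le hβ hρ0 hβ1 (hterm u)
  have hTs : ∀ u, Summable (fun j => β ^ j • (a (u + j) • Pt ^ j)) := fun u =>
    core_summable hβ hρ0 hβ1 (hterm u)
  have hTrec : ∀ u, T u = a u • 1 + β • (Pt * T (u+1)) := fun u => by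
    simp only [hT]
    rw [(hTs u).tsum_eq_zero_add, ← (hTs (u+1)).tsum_mul_left,
      ← ((hTs (u+1)).mul_left Pt).tsum_const_smul]
    congr 1
    · simp
    · congr 1; funext j
      rw [show u + (j + 1) = u + 1 + j by ring, pow_succ', pow_succ', mul_smul, mul_smul_comm,
        mul_smul_comm]
  have hinv : 0 ≤ (1 - β * ρ)⁻¹ := inv_nonneg.2 (by linarith)
  set F := coreF Pt P1 a with hF
  have hFle : ∀ i, ‖F i‖ ≤ c * d * ρ ^ i := coreF_le hPt hd hdρ hc ha
  have s1 : Summable (fun u => β ^ u • (a u • (Pt ^ u * P1 * T (u+1)))) := by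
    refine core_summable (q := ρ ^ 2) (c := c * (c * ρ * (1 - β * ρ)⁻¹)) hβ (by positivity) hβ2 ?_
    intro u
    rw [norm_smul, Real.norm_eq_abs]
    have : ‖Pt ^ u * P1 * T (u+1)‖ ≤ ‖P1‖ * (c * ρ ^ (u+1) * (1 - β * ρ)⁻¹) :=
      (norm_mul_le _ _).trans (mul_le_mul ((norm_mul_le _ _).trans
        (mul_le_of_le_one_left (norm_nonneg _) (core_pow_le hPt u))) (hTle _) (norm_nonneg _)
        (norm_nonneg _))
    calc _ ≤ |a u| * (‖P1‖ * (c * ρ ^ (u+1) * (1 - β * ρ)⁻¹)) := by gcongr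
      _ = (|a u| * ‖P1‖) * (c * ρ ^ (u+1) * (1 - β * ρ)⁻¹) := by ring
      _ ≤ (c * ρ ^ u) * (c * ρ ^ (u+1) * (1 - β * ρ)⁻¹) :=
          mul_le_mul_of_nonneg_right (ha u) (by positivity)
      _ = _ := by ring
  have s2 : Summable (fun i => β ^ i • (a i • F i)) := by
    refine core_summable (q := ρ ^ 2) (c := c * (c * d)) hβ (by positivity) hβ2 ?_
    intro i
    rw [norm_smul, Real.norm_eq_abs]
    calc _ ≤ (c * ρ ^ i) * (c * d * ρ ^ i) := by
          gcongr; exacts [ha0 i, hFle i]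
      _ = _ := by ring
  refine ⟨s1, s2, ?_⟩
  have hV : Tendsto (fun n => β ^ n • (F n * T n)) atTop (𝓝 0) := by
    have hFT : ∀ i, ‖F i * T i‖ ≤ ((c * d) * (c * (1 - β * ρ)⁻¹)) * (ρ ^ 2) ^ i := by
      intro i
      calc ‖F i * T i‖ ≤ (c * d * ρ ^ i) * (c * ρ ^ i * (1 - β * ρ)⁻¹) :=
          (norm_mul_le _ _).trans (mul_le_mul (hFle i) (hTle i) (norm_nonneg _) (by positivity))
        _ = _ := by ring
    exact (core_summable hβ (by positivity) hβ2 hFT).tendsto_atTop_zero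
  have hdiff := ((s1.const_smul β).sub s2).hasSum.tendsto_sum_nat
  have hpart : ∀ n, ∑ i ∈ Finset.range n, (β • (β ^ i • (a i • (Pt ^ i * P1 * T (i+1))))
      - β ^ i • (a i • F i)) = β ^ n • (F n * T n) := by
    intro n
    induction n with
    | zero => simp [hF, coreF]
    | succ n ih =>
      rw [Finset.sum_range_succ, ih, hTrec n]
      simp only [hF, coreF, add_mul, mul_add, smul_add, smul_mul_assoc, mul_smul_comm, mul_one,
        pow_succ', mul_smul, mul_assoc]
      rw [smul_comm (β ^ n) β]
      abel
  have := tendsto_nhds_unique (hdiff.congr hpart) hV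
  rw [(s1.const_smul β).tsum_sub s2, s1.tsum_const_smul] at this
  exact (sub_eq_zero.1 this).symm


/-- The second order expansion in a Banach algebra. -/
theorem core_main {Pt P1 P2 G : A} {a b : ℕ → ℝ} {β ρ c d : ℝ} (hPt : ‖Pt‖ ≤ 1)
    (hρ : 1 < ρ) (hd : 0 ≤ d) (hdρ : 1 + d = ρ * d) (hc : 0 ≤ c)
    (hβ : 0 < β) (hβρ : β * ρ ^ 3 < 1) (hG : (1 - β • Pt) * G = 1)
    (ha0 : ∀ i, |a (i+1)| ≤ c * ρ ^ i) (hb0 : ∀ i, |b (i+1)| ≤ c * ρ ^ i)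
    (ha : ∀ i, |a (i+1)| * ‖P1‖ ≤ c * ρ ^ i) :
    Summable (fun k : ℕ => (a (k+1) * β ^ k) • Pt ^ k) ∧
    Summable (fun k : ℕ => (b (k+1) * β ^ k) • Pt ^ k) ∧
    Summable (fun u : ℕ => (a (u + 1) * β ^ u) •
        (Pt ^ u * P1 * (∑' j : ℕ, (a (u + 2 + j) * β ^ j) • Pt ^ j) * P1 * G)) ∧
    ∀ (M e : ℕ → A) (ε η : ℝ), 0 < ε → ε ^ 3 ≤ η → M 0 = 1 →
      (∀ i, M (i+1) = M i * (Pt + e i)) → (∀ i, ‖M i‖ ≤ 1) →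
      (∀ i, ‖e i‖ ≤ c * ε * ρ ^ i) →
      (∀ i, ‖e i - (ε * a (i+1)) • P1‖ ≤ c * ε ^ 2 * ρ ^ i) →
      (∀ i, ‖e i - ((ε * a (i+1)) • P1 + (ε ^ 2 / 2 * b (i+1)) • P2)‖ ≤ c * η * ρ ^ i) →
      Summable (fun i => β ^ i • M i) ∧
      ‖∑' i, β ^ i • M i - (G + (ε * β) • ((∑' k : ℕ, (a (k+1) * β ^ k) • Pt ^ k) * P1 * G)
        + (ε ^ 2 / 2 * β) • ((∑' k : ℕ, (b (k+1) * β ^ k) • Pt ^ k) * P2 * G)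
        + (ε ^ 2 * β ^ 2) • ∑' u : ℕ, (a (u + 1) * β ^ u) •
        (Pt ^ u * P1 * (∑' j : ℕ, (a (u + 2 + j) * β ^ j) • Pt ^ j) * P1 * G))‖
      ≤ (β * ((c + c * d * c + (c ^ 2 * d + c) * d * c) * (1 - β * ρ ^ 3)⁻¹) * ‖G‖) * η := by
  have hρ0 : 0 < ρ := by linarith
  have hβ1 : β * ρ < 1 := lt_of_le_of_lt (by gcongr; exact le_self_pow₀ hρ.le (by norm_num)) hβρ
  have hβ0 : β < 1 := lt_of_le_of_lt (le_mul_of_one_le_right hβ.le hρ.le) hβ1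
  have hconv : ∀ f : ℕ → ℝ, (fun k : ℕ => (f k * β ^ k) • Pt ^ k)
      = fun k => β ^ k • (f k • Pt ^ k) := fun f => by
    funext k; rw [mul_comm, mul_smul]
  have hsum : ∀ f : ℕ → ℝ, (∀ i, |f i| ≤ c * ρ ^ i) →
      Summable (fun k => β ^ k • (f k • Pt ^ k)) := fun f hf =>
    core_summable hβ hρ0 hβ1 (fun i => by
      rw [norm_smul, Real.norm_eq_abs]
      exact (mul_le_of_le_one_right (abs_nonneg _) (core_pow_le hPt i)).trans (hf i))
  have hsa := hsum (fun k => a (k+1)) ha0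
  have hsb := hsum (fun k => b (k+1)) hb0
  obtain ⟨t1, t2, t3⟩ := core_telescope (a := fun i => a (i+1)) hPt hρ hd hdρ hc hβ hβρ ha0 ha
  have hT : (fun u : ℕ => (a (u + 1) * β ^ u) •
        (Pt ^ u * P1 * (∑' j : ℕ, (a (u + 2 + j) * β ^ j) • Pt ^ j) * P1 * G))
      = fun u => (β ^ u • (a (u+1) • (Pt ^ u * P1 *
        ∑' j, β ^ j • (a (u + 1 + j + 1) • Pt ^ j)))) * (P1 * G) := by
    funext u
    have : ∑' j : ℕ, (a (u + 2 + j) * β ^ j) • Pt ^ j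
        = ∑' j, β ^ j • (a (u + 1 + j + 1) • Pt ^ j) := by
      congr 1; funext j
      rw [show u + 2 + j = u + 1 + j + 1 by ring, mul_comm, mul_smul]
    rw [this, mul_comm, mul_smul]
    simp only [smul_mul_assoc, mul_assoc]
  rw [hT, hconv (fun k => a (k+1)), hconv (fun k => b (k+1))]
  refine ⟨hsa, hsb, t1.mul_right _, ?_⟩
  intro M e ε η hε hη hM0 hM hM1 h1 h2 h3
  have hMs : Summable (fun i => β ^ i • M i) :=
    core_summable (q := 1) (c := 1) hβ one_pos (by simpa using hβ0) (fun i => by simpa using hM1 i)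
  refine ⟨hMs, ?_⟩
  have hterm := core_term (a := fun i => a (i+1)) (b := fun i => b (i+1)) hPt hρ.le hd hdρ hc hε hη
    hM0 hM hM1 ha h1 h2 h3
  have hes : Summable (fun i => β ^ i • (M i * e i)) :=
    core_summable (q := ρ) (c := c * ε) hβ hρ0 hβ1 (fun i =>
      (norm_mul_le _ _).trans ((mul_le_of_le_one_left (norm_nonneg _) (hM1 i)).trans (h1 i)))
  have hle := core_tsum_le hβ (by positivity) hβρ hterm
  have heq : ∑' i, β ^ i • (M i * e i - (ε • (a (i+1) • (Pt ^ i * P1))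
        + (ε ^ 2 / 2) • (b (i+1) • (Pt ^ i * P2))
        + ε ^ 2 • (a (i+1) • (coreF Pt P1 (fun i => a (i+1)) i * P1))))
      = ∑' i, β ^ i • (M i * e i)
        - (ε • ((∑' k, β ^ k • (a (k+1) • Pt ^ k)) * P1)
          + (ε ^ 2 / 2) • ((∑' k, β ^ k • (b (k+1) • Pt ^ k)) * P2)
          + ε ^ 2 • ((∑' i, β ^ i • (a (i+1) • coreF Pt P1 (fun i => a (i+1)) i)) * P1)) := by
    refine HasSum.tsum_eq ?_
    have H := hes.hasSum.sub ((((hsa.hasSum.mul_right P1).const_smul ε).add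
      ((hsb.hasSum.mul_right P2).const_smul (ε ^ 2 / 2))).add
      ((t2.hasSum.mul_right P1).const_smul (ε ^ 2)))
    refine H.congr_fun ?_
    intro i
    simp only [smul_sub, smul_add, smul_mul_assoc]
    rw [smul_comm (β ^ i) ε, smul_comm (β ^ i) (ε ^ 2 / 2), smul_comm (β ^ i) (ε ^ 2)]
  rw [heq] at hle
  rw [core_resolvent hG hM0 hM hMs, t1.tsum_mul_right]
  rw [t3] at hle
  generalize (∑' u, β ^ u • (a (u+1) • (Pt ^ u * P1 *
        ∑' j, β ^ j • (a (u + 1 + j + 1) • Pt ^ j)))) = U at hle ⊢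
  generalize (∑' i, β ^ i • (M i * e i)) = X at hle ⊢
  generalize (∑' k, β ^ k • (a (k+1) • Pt ^ k)) = Sa at hle ⊢
  generalize (∑' k, β ^ k • (b (k+1) • Pt ^ k)) = Sb at hle ⊢
  have : G + β • (X * G) - (G + (ε * β) • (Sa * P1 * G) + (ε ^ 2 / 2 * β) • (Sb * P2 * G)
      + (ε ^ 2 * β ^ 2) • (U * (P1 * G)))
      = β • ((X - (ε • (Sa * P1) + (ε ^ 2 / 2) • (Sb * P2) + ε ^ 2 • ((β • U) * P1))) * G) := by
    rw [mul_comm ε β, mul_comm (ε ^ 2 / 2) β, show ε ^ 2 * β ^ 2 = β * (ε ^ 2 * β) by ring]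
    simp only [sub_mul, add_mul, smul_mul_assoc, mul_smul, smul_sub, smul_add, mul_assoc]
    abel
  rw [this, norm_smul, Real.norm_of_nonneg hβ.le]
  calc _ ≤ β * (((c + c * d * c + (c ^ 2 * d + c) * d * c) * η * (1 - β * ρ ^ 3)⁻¹) * ‖G‖) := by
        gcongr
        exact (norm_mul_le _ _).trans (by gcongr)
    _ = _ := by ring


theorem coef_bound {a : ℕ → ℝ} {p γ c : ℝ} {i₀ : ℕ} (hγ : 0 < γ)
    (h : ∀ i : ℕ, i₀ ≤ i → |a i| ≤ c * (i : ℝ) ^ p) :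
    ∃ C > 0, ∀ i, |a i| ≤ C * Real.exp γ ^ i := by
  have h1 : a =O[atTop] (fun i : ℕ => (i : ℝ) ^ p) := by
    refine Asymptotics.IsBigO.of_bound c ?_
    filter_upwards [eventually_ge_atTop i₀] with i hi
    rw [Real.norm_eq_abs, Real.norm_of_nonneg (by positivity)]
    exact h i hi
  have h2 : (fun i : ℕ => (i : ℝ) ^ p) =O[atTop] (fun i : ℕ => Real.exp (γ * i)) :=
    ((isLittleO_rpow_exp_pos_mul_atTop p hγ).isBigO).comp_tendsto tendsto_natCast_atTop_atTop
  obtain ⟨C, hC, hb⟩ := Asymptotics.bound_of_isBigO_nat_atTop (h1.trans h2)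
  refine ⟨C, hC, fun i => ?_⟩
  have := hb (x := i) (Real.exp_ne_zero _)
  rwa [Real.norm_eq_abs, Real.norm_of_nonneg (Real.exp_pos _).le, mul_comm γ, Real.exp_nat_mul]
    at this

theorem eventually_small (δ w B ε₀ : ℝ) (hδ : 0 < δ) (hε₀ : 0 < ε₀) :
    ∃ ε₁ > 0, ∀ ε : ℝ, 0 < ε → ε < ε₁ → ε < ε₀ ∧ ε ≤ 1 ∧ 1 ≤ Real.log (1/ε) ∧
      B ≤ Real.log (1/ε) ^ δ ∧ ε * Real.log (1/ε) ^ w ≤ 1 := by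
  have t0 : Tendsto (fun ε : ℝ => 1 / ε) (𝓝[>] 0) atTop := by
    simpa using tendsto_inv_nhdsGT_zero (𝕜 := ℝ)
  have t1 : Tendsto (fun ε : ℝ => Real.log (1/ε)) (𝓝[>] 0) atTop :=
    Real.tendsto_log_atTop.comp t0
  have e1 := t1.eventually_ge_atTop 1
  have e2 := ((tendsto_rpow_atTop hδ).comp t1).eventually_ge_atTop B
  have e3 : ∀ᶠ ε : ℝ in 𝓝[>] 0, ‖Real.log (1/ε) ^ w‖ ≤ 1 * ‖(1/ε) ^ (1:ℝ)‖ :=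
    t0.eventually ((isLittleO_log_rpow_rpow_atTop w one_pos).bound one_pos)
  have e4 : ∀ᶠ ε : ℝ in 𝓝[>] 0, ε < min ε₀ 1 :=
    nhdsWithin_le_nhds (eventually_lt_nhds (by positivity))
  have H := ((e1.and e2).and (e3.and e4))
  obtain ⟨ε₁, h1, h2⟩ := mem_nhdsGT_iff_exists_Ioo_subset.1 H
  refine ⟨ε₁, h1, fun ε hε hlt => ?_⟩
  obtain ⟨⟨a1, a2⟩, a3, a4⟩ := h2 ⟨hε, hlt⟩
  refine ⟨a4.trans_le (min_le_left _ _), (a4.trans_le (min_le_right _ _)).le, a1, a2, ?_⟩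
  rw [Real.rpow_one, one_mul, Real.norm_of_nonneg (by positivity : 0 ≤ 1 / ε)] at a3
  have := (le_abs_self _).trans a3
  calc ε * Real.log (1/ε) ^ w ≤ ε * (1/ε) := by gcongr
    _ = 1 := by field_simp

set_option maxHeartbeats 4000000 in
theorem core_asymp [FiniteDimensional ℝ A]
    (P : ℕ → ℝ → A) (a1 a2 : ℕ → ℝ) (Pt P1 P2 G : A)
    (s δ p : ℝ) (hδ : 0 < δ)
    (hP1 : ∀ k : ℕ, 1 ≤ k → ∀ ε : ℝ, 0 < ε → ‖P k ε‖ ≤ 1) (hPt : ‖Pt‖ ≤ 1)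
    (hi : ∃ c > (0:ℝ), ∃ ε₀ > (0:ℝ), ∀ ε : ℝ, 0 < ε → ε < ε₀ →
      ∀ i : ℕ, 1 ≤ i → (i : ℝ) ≤ Real.log (1/ε) ^ (1 + δ) →
        ‖P i ε - (Pt + (ε * a1 i) • P1 + (ε ^ 2 / 2 * a2 i) • P2)‖
          ≤ c * ε ^ 3 * Real.log (1/ε) ^ s)
    (hii : ∃ c > (0:ℝ), ∃ i₀ : ℕ, ∀ i : ℕ, i₀ ≤ i →
      |a1 i| ≤ c * (i : ℝ) ^ p ∧ |a2 i| ≤ c * (i : ℝ) ^ p)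
    (α : ℝ) (hα : 0 < α) (hG : (1 - Real.exp (-α) • Pt) * G = 1)
    (φ : A →L[ℝ] ℝ) (M : ℝ → ℕ → A) (hM0 : ∀ ε, M ε 0 = 1)
    (hM : ∀ ε i, M ε (i+1) = M ε i * P (i+1) ε) :
      Summable (fun k : ℕ => |a1 (k + 1)| * Real.exp (-α * k) * ‖Pt ^ k‖) ∧
      Summable (fun k : ℕ => (a1 (k + 1) * Real.exp (-α * k)) • Pt ^ k) ∧
      Summable (fun k : ℕ => |a2 (k + 1)| * Real.exp (-α * k) * ‖Pt ^ k‖) ∧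
      Summable (fun k : ℕ => (a2 (k + 1) * Real.exp (-α * k)) • Pt ^ k) ∧
      (∀ u : ℕ, Summable (fun j : ℕ => |a1 (u + 2 + j)| * Real.exp (-α * j) * ‖Pt ^ j‖) ∧
        Summable (fun j : ℕ => (a1 (u + 2 + j) * Real.exp (-α * j)) • Pt ^ j)) ∧
      Summable (fun u : ℕ =>
        ‖(a1 (u + 1) * Real.exp (-α * u)) •
          (Pt ^ u * P1 * (∑' j : ℕ, (a1 (u + 2 + j) * Real.exp (-α * j)) • Pt ^ j) * P1 * G)‖) ∧
      Summable (fun u : ℕ =>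
        (a1 (u + 1) * Real.exp (-α * u)) •
          (Pt ^ u * P1 * (∑' j : ℕ, (a1 (u + 2 + j) * Real.exp (-α * j)) • Pt ^ j) * P1 * G)) ∧
      ∃ w : ℝ, ∃ c > (0:ℝ), ∃ ε₁ > (0:ℝ), ∀ ε : ℝ, 0 < ε → ε < ε₁ →
        |∑' j : ℕ, Real.exp (-α * j) * φ (M ε j) -
            (φ G +
              ε * Real.exp (-α) *
                φ ((∑' k : ℕ, (a1 (k + 1) * Real.exp (-α * k)) • Pt ^ k) * P1 * G) +
              ε ^ 2 / 2 * Real.exp (-α) *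
                φ ((∑' k : ℕ, (a2 (k + 1) * Real.exp (-α * k)) • Pt ^ k) * P2 * G) +
              ε ^ 2 * Real.exp (-(2 * α)) *
                φ (∑' u : ℕ,
                    (a1 (u + 1) * Real.exp (-α * u)) •
                      (Pt ^ u * P1 *
                        (∑' j : ℕ, (a1 (u + 2 + j) * Real.exp (-α * j)) • Pt ^ j) * P1 * G)))|
          ≤ c * ε ^ 3 * Real.log (1/ε) ^ w := by
  have hexp : ∀ k : ℕ, Real.exp (-α * k) = Real.exp (-α) ^ k := fun k => by
    rw [mul_comm, Real.exp_nat_mul]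
  have hexp2 : Real.exp (-(2 * α)) = Real.exp (-α) ^ 2 := by
    rw [← Real.exp_nat_mul]; congr 1; push_cast; ring
  simp only [hexp, hexp2]
  set β := Real.exp (-α) with hβdef
  have hβ : 0 < β := Real.exp_pos _
  obtain ⟨ca, hca, i₀, hcoef⟩ := hii
  obtain ⟨γ, hγdef⟩ : ∃ γ, γ = α / 8 := ⟨_, rfl⟩
  have hγ : 0 < γ := by rw [hγdef]; positivity
  obtain ⟨C1, hC1, hb1⟩ := coef_bound hγ (fun i h => (hcoef i h).1)
  obtain ⟨C2, hC2, hb2⟩ := coef_bound hγ (fun i h => (hcoef i h).2)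
  set σ := Real.exp γ with hσdef
  have hσ1 : 1 < σ := Real.one_lt_exp_iff.2 hγ
  obtain ⟨ρ, hρdef⟩ : ∃ ρ, ρ = σ ^ 2 := ⟨_, rfl⟩
  have hσρ : σ ≤ ρ := by rw [hρdef]; exact le_self_pow₀ hσ1.le (by norm_num)
  have hρ : 1 < ρ := hσ1.trans_le hσρ
  have hρ0 : 0 < ρ := by linarith
  have hβρ : β * ρ ^ 3 < 1 := by
    rw [hρdef, hσdef, hβdef, ← pow_mul, ← Real.exp_nat_mul, ← Real.exp_add, Real.exp_lt_one_iff,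
      hγdef]
    push_cast; linarith
  have hβ1 : β * ρ < 1 := lt_of_le_of_lt (by gcongr; exact le_self_pow₀ hρ.le (by norm_num)) hβρ
  obtain ⟨cR, hcR, ε₀, hε₀, hR⟩ := hi
  set n1 := ‖P1‖ with hn1
  set n2 := ‖P2‖ with hn2
  have hn1' : 0 ≤ n1 := norm_nonneg _
  have hn2' : 0 ≤ n2 := norm_nonneg _
  set C3 := cR + 2 + C1 * n1 + C2 * n2 with hC3
  have hC3' : 0 < C3 := by positivity
  set c := C3 * ρ + (C1 + C2) * ρ * (1 + n1 + n2) with hc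
  have hc0 : 0 < c := by positivity
  set d := (ρ - 1)⁻¹ with hd
  have hd0 : 0 ≤ d := inv_nonneg.2 (by linarith)
  have hdρ : 1 + d = ρ * d := by
    have : ρ - 1 ≠ 0 := by linarith
    rw [hd]; field_simp; ring
  have hpow : ∀ i, σ ^ i ≤ ρ ^ i := fun i => by gcongr
  have hA1 : ∀ i, |a1 i| ≤ C1 * ρ ^ i := fun i => (hb1 i).trans (by gcongr)
  have hA2 : ∀ i, |a2 i| ≤ C2 * ρ ^ i := fun i => (hb2 i).trans (by gcongr)
  have z1 := mul_pos hC1 hρ0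
  have z2 := mul_pos hC2 hρ0
  have z3 := mul_pos hC3' hρ0
  have z4 := mul_nonneg z1.le hn1'
  have z5 := mul_nonneg z1.le hn2'
  have z6 := mul_nonneg z2.le hn1'
  have z7 := mul_nonneg z2.le hn2'
  have hCc1 : C1 * ρ ≤ c := by rw [hc]; linarith
  have hCc2 : C2 * ρ ≤ c := by rw [hc]; linarith
  have hCc3 : C3 * ρ + C1 * ρ * n1 + C2 * ρ * n2 ≤ c := by rw [hc]; linarith
  have hCc4 : C1 * ρ * n1 ≤ c := by linarith
  have hCc5 : C3 * ρ ≤ c := by linarith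
  have hCc6 : C3 * ρ + C2 * ρ * n2 ≤ c := by linarith
  have ha0 : ∀ i, |a1 (i+1)| ≤ c * ρ ^ i := fun i => (hA1 (i+1)).trans (by
    rw [pow_succ', ← mul_assoc]; gcongr)
  have hb0 : ∀ i, |a2 (i+1)| ≤ c * ρ ^ i := fun i => (hA2 (i+1)).trans (by
    rw [pow_succ', ← mul_assoc]; gcongr)
  have haP : ∀ i, |a1 (i+1)| * n1 ≤ c * ρ ^ i := fun i => by
    calc _ ≤ (C1 * ρ ^ (i+1)) * n1 := by gcongr; exact hA1 _
      _ = (C1 * ρ * n1) * ρ ^ i := by ring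
      _ ≤ _ := by gcongr
  obtain ⟨m1, m2, m3, m4⟩ := core_main (P1 := P1) (P2 := P2) (G := G) (a := a1) (b := a2)
    hPt hρ hd0 hdρ hc0.le hβ hβρ hG ha0 hb0 haP
  have hnorm : ∀ f : ℕ → ℝ, Summable (fun k : ℕ => (f k * β ^ k) • Pt ^ k) →
      Summable (fun k : ℕ => |f k| * β ^ k * ‖Pt ^ k‖) := fun f hf => by
    refine hf.norm.congr (fun k => ?_)
    rw [norm_smul, norm_mul, Real.norm_eq_abs, Real.norm_of_nonneg (by positivity : 0 ≤ β ^ k)]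
  have m5 : ∀ u : ℕ, Summable (fun j : ℕ => (a1 (u + 2 + j) * β ^ j) • Pt ^ j) := fun u => by
    refine (core_summable (q := ρ) (c := C1 * ρ ^ (u+2)) hβ hρ0 hβ1
      (f := fun j => a1 (u + 2 + j) • Pt ^ j) (fun j => ?_)).congr (fun j => ?_)
    · rw [norm_smul, Real.norm_eq_abs, mul_assoc, ← pow_add]
      exact (mul_le_of_le_one_right (abs_nonneg _) (core_pow_le hPt j)).trans (hA1 _)
    · rw [mul_comm, mul_smul]
  refine ⟨hnorm (fun k => a1 (k+1)) m1, m1, hnorm (fun k => a2 (k+1)) m2, m2,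
    fun u => ⟨hnorm (fun j => a1 (u+2+j)) (m5 u), m5 u⟩, m3.norm, m3, ?_⟩
  obtain ⟨w, hwdef⟩ : ∃ w, w = max s 0 := ⟨_, rfl⟩
  have hw0 : 0 ≤ w := hwdef ▸ le_max_right _ _
  have hws : s ≤ w := hwdef ▸ le_max_left _ _
  obtain ⟨ε₁, hε₁, hsmall⟩ := eventually_small δ w (3 / γ) ε₀ hδ hε₀
  set K := (β * ((c + c * d * c + (c ^ 2 * d + c) * d * c) * (1 - β * ρ ^ 3)⁻¹) * ‖G‖) with hK
  have hK0 : 0 ≤ K := by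
    have : 0 ≤ (1 - β * ρ ^ 3)⁻¹ := inv_nonneg.2 (by linarith)
    positivity
  refine ⟨w, ‖φ‖ * K + 1, by positivity, ε₁, hε₁, ?_⟩
  intro ε hε hεlt
  obtain ⟨s1, s2, s3, s4, s5⟩ := hsmall ε hε hεlt
  set L := Real.log (1/ε) with hL
  have hL0 : 0 < L := by linarith
  have hLw : 1 ≤ L ^ w := Real.one_le_rpow s3 hw0
  obtain ⟨η, hη⟩ : ∃ η, η = ε ^ 3 * L ^ w := ⟨_, rfl⟩
  have hη3 : ε ^ 3 ≤ η := by rw [hη]; exact le_mul_of_one_le_right (by positivity) hLw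
  have hη2 : η ≤ ε ^ 2 := by
    rw [hη]
    calc ε ^ 3 * L ^ w = ε ^ 2 * (ε * L ^ w) := by ring
      _ ≤ ε ^ 2 * 1 := by gcongr
      _ = _ := mul_one _
  have hη0 : 0 < η := lt_of_lt_of_le (by positivity) hη3
  have hε21 : ε ^ 2 ≤ ε := pow_le_of_le_one hε.le s2 (by norm_num)
  have hε2 : ε ^ 2 ≤ 1 := hε21.trans s2
  -- unified remainder bound
  have hrem : ∀ i, 1 ≤ i → ‖P i ε - (Pt + (ε * a1 i) • P1 + (ε ^ 2 / 2 * a2 i) • P2)‖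
      ≤ C3 * η * ρ ^ i := by
    intro i hi1
    by_cases hle : (i : ℝ) ≤ L ^ (1 + δ)
    · refine (hR ε hε s1 i hi1 hle).trans ?_
      have q1 : L ^ s ≤ L ^ w := Real.rpow_le_rpow_of_exponent_le s3 hws
      have q2 : cR ≤ C3 := by
        rw [hC3]; linarith [mul_nonneg hC1.le hn1', mul_nonneg hC2.le hn2']
      have q3 : 1 ≤ ρ ^ i := one_le_pow₀ hρ.le
      calc cR * ε ^ 3 * L ^ s ≤ C3 * ε ^ 3 * L ^ w := by gcongr
        _ = C3 * η := by rw [hη]; ring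
        _ ≤ _ := le_mul_of_one_le_right (by positivity) q3
    · have q1 : 3 * L ≤ γ * i := by
        push Not at hle
        rw [Real.rpow_add hL0, Real.rpow_one] at hle
        have : 3 ≤ γ * L ^ δ := by rw [div_le_iff₀ hγ] at s4; linarith
        have hmul : L * 3 ≤ L * (γ * L ^ δ) := mul_le_mul_of_nonneg_left this hL0.le
        have hmul2 : γ * (L * L ^ δ) ≤ γ * i := mul_le_mul_of_nonneg_left hle.le hγ.le
        linarith
      have q2 : 1 ≤ ε ^ 3 * σ ^ i := by
        have : ε = Real.exp (-L) := by
          rw [hL, one_div, Real.log_inv, neg_neg, Real.exp_log hε]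
        rw [this, hσdef, ← Real.exp_nat_mul, ← Real.exp_nat_mul, ← Real.exp_add]
        apply Real.one_le_exp
        push_cast
        linarith
      have q3 : 1 ≤ σ ^ i := one_le_pow₀ hσ1.le
      have r1 : ‖(ε * a1 i) • P1‖ ≤ C1 * n1 * σ ^ i := by
        rw [norm_smul, norm_mul, Real.norm_of_nonneg hε.le, Real.norm_eq_abs]
        calc ε * |a1 i| * ‖P1‖ ≤ 1 * (C1 * σ ^ i) * n1 := by gcongr; exact hb1 i
          _ = _ := by ring
      have r2 : ‖(ε ^ 2 / 2 * a2 i) • P2‖ ≤ C2 * n2 * σ ^ i := by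
        rw [norm_smul, norm_mul, Real.norm_of_nonneg (by positivity), Real.norm_eq_abs]
        calc ε ^ 2 / 2 * |a2 i| * ‖P2‖ ≤ 1 * (C2 * σ ^ i) * n2 := by
              gcongr; exacts [by linarith, hb2 i]
          _ = _ := by ring
      calc _ ≤ ‖P i ε‖ + ‖Pt + (ε * a1 i) • P1 + (ε ^ 2 / 2 * a2 i) • P2‖ := norm_sub_le _ _
        _ ≤ 1 + (1 + C1 * n1 * σ ^ i + C2 * n2 * σ ^ i) :=
          add_le_add (hP1 i hi1 ε hε) ((norm_add₃_le).trans (add_le_add (add_le_add hPt r1) r2))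
        _ ≤ C3 * σ ^ i := by
          have hcRσ : 0 ≤ cR * σ ^ i := by positivity
          rw [hC3, add_mul, add_mul, add_mul]; linarith
        _ ≤ C3 * σ ^ i * (ε ^ 3 * σ ^ i) := le_mul_of_one_le_right (by positivity) q2
        _ = C3 * ε ^ 3 * ρ ^ i := by rw [hρdef]; ring
        _ ≤ _ := by gcongr
  have g3 : ∀ i, ‖(P (i+1) ε - Pt) - ((ε * a1 (i+1)) • P1 + (ε ^ 2 / 2 * a2 (i+1)) • P2)‖
      ≤ C3 * ρ * η * ρ ^ i := fun i => by
    rw [sub_sub, ← add_assoc]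
    exact (hrem (i+1) (by omega)).trans_eq (by ring)
  have g2 : ∀ i, ‖(P (i+1) ε - Pt) - (ε * a1 (i+1)) • P1‖
      ≤ (C3 * ρ + C2 * ρ * n2) * ε ^ 2 * ρ ^ i := fun i => by
    have r2 : ‖(ε ^ 2 / 2 * a2 (i+1)) • P2‖ ≤ C2 * ρ * n2 * ε ^ 2 * ρ ^ i := by
      rw [norm_smul, norm_mul, Real.norm_of_nonneg (by positivity), Real.norm_eq_abs]
      calc ε ^ 2 / 2 * |a2 (i+1)| * ‖P2‖ ≤ ε ^ 2 * (C2 * ρ ^ (i+1)) * n2 := by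
            gcongr; exacts [by linarith [sq_nonneg ε], hA2 _]
        _ = _ := by ring
    have : (P (i+1) ε - Pt) - (ε * a1 (i+1)) • P1
      = ((P (i+1) ε - Pt) - ((ε * a1 (i+1)) • P1 + (ε ^ 2 / 2 * a2 (i+1)) • P2))
        + (ε ^ 2 / 2 * a2 (i+1)) • P2 := by abel
    rw [this]
    calc _ ≤ C3 * ρ * η * ρ ^ i + C2 * ρ * n2 * ε ^ 2 * ρ ^ i :=
          (norm_add_le _ _).trans (add_le_add (g3 i) r2)
      _ ≤ C3 * ρ * ε ^ 2 * ρ ^ i + C2 * ρ * n2 * ε ^ 2 * ρ ^ i := by gcongr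
      _ = _ := by ring
  have g1 : ∀ i, ‖P (i+1) ε - Pt‖ ≤ c * ε * ρ ^ i := fun i => by
    have r1 : ‖(ε * a1 (i+1)) • P1‖ ≤ C1 * ρ * n1 * ε * ρ ^ i := by
      rw [norm_smul, norm_mul, Real.norm_of_nonneg hε.le, Real.norm_eq_abs]
      calc ε * |a1 (i+1)| * ‖P1‖ ≤ ε * (C1 * ρ ^ (i+1)) * n1 := by gcongr; exact hA1 _
        _ = _ := by ring
    have : P (i+1) ε - Pt
      = ((P (i+1) ε - Pt) - (ε * a1 (i+1)) • P1) + (ε * a1 (i+1)) • P1 := by abel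
    rw [this]
    calc _ ≤ (C3 * ρ + C2 * ρ * n2) * ε ^ 2 * ρ ^ i + C1 * ρ * n1 * ε * ρ ^ i :=
          (norm_add_le _ _).trans (add_le_add (g2 i) r1)
      _ ≤ (C3 * ρ + C2 * ρ * n2) * ε * ρ ^ i + C1 * ρ * n1 * ε * ρ ^ i := by gcongr
      _ = (C3 * ρ + C1 * ρ * n1 + C2 * ρ * n2) * ε * ρ ^ i := by ring
      _ ≤ _ := by gcongr
  have hMn : ∀ i, ‖M ε i‖ ≤ 1 := fun i => by
    induction i with
    | zero => rw [hM0, norm_one]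
    | succ i ih =>
      rw [hM]
      exact (norm_mul_le _ _).trans (mul_le_one₀ ih (norm_nonneg _) (hP1 _ (by omega) ε hε))
  obtain ⟨k1, k2⟩ := m4 (M ε) (fun i => P (i+1) ε - Pt) ε η hε hη3 (hM0 ε)
    (fun i => by rw [hM]; congr 1; abel) hMn g1
    (fun i => (g2 i).trans (by gcongr)) (fun i => (g3 i).trans (by gcongr))
  have hφ : ∑' j : ℕ, β ^ j * φ (M ε j) = φ (∑' j, β ^ j • M ε j) := by
    rw [φ.map_tsum k1]
    simp only [map_smul, smul_eq_mul]
  rw [hφ]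
  have hfin := (φ.le_opNorm _).trans (mul_le_mul_of_nonneg_left k2 (norm_nonneg φ))
  simp only [map_sub, map_add, map_smul, smul_eq_mul, Real.norm_eq_abs] at hfin
  refine hfin.trans ?_
  calc ‖φ‖ * (K * η) ≤ (‖φ‖ * K + 1) * η := by
        rw [add_mul, one_mul, mul_assoc]; linarith
    _ = _ := by rw [hη]; ring

end Core

section MatAux
attribute [local instance] Matrix.linftyOpNormedRing Matrix.linftyOpNormedAlgebra

theorem matNorm_eq_norm {S : Type*} [Fintype S] [Nonempty S] [DecidableEq S]
    (B : Matrix S S ℝ) : matNorm B = ‖B‖ := by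
  rw [Matrix.linfty_opNorm_def, matNorm]
  apply le_antisymm
  · refine ciSup_le fun x => ?_
    have := Finset.le_sup (f := fun i => ∑ j, ‖B i j‖₊) (Finset.mem_univ x)
    have h2 := NNReal.coe_le_coe.2 this
    simpa using h2
  · obtain ⟨x, -, hx⟩ := Finset.exists_mem_eq_sup Finset.univ Finset.univ_nonempty
      (fun i => ∑ j, ‖B i j‖₊)
    rw [hx]
    have h2 := le_ciSup (f := fun x => ∑ y, |B x y|) (Set.finite_range _).bddAbove x
    simpa using h2

theorem norm_le_one_of_stochastic {S : Type*} [Fintype S] [Nonempty S] [DecidableEq S]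
    {B : Matrix S S ℝ} (h : IsStochastic B) : ‖B‖ ≤ 1 := by
  rw [← matNorm_eq_norm]
  refine ciSup_le fun x => ?_
  rw [← h.2 x]
  exact (Finset.sum_congr rfl fun y _ => abs_of_nonneg (h.1 x y)).le

theorem entry_le_matNorm {S : Type*} [Fintype S] (B : Matrix S S ℝ) (x y : S) :
    |B x y| ≤ matNorm B :=
  (Finset.single_le_sum (f := fun y => |B x y|) (fun _ _ => abs_nonneg _)
    (Finset.mem_univ y)).trans
    (le_ciSup (f := fun x => ∑ y, |B x y|) (Set.finite_range _).bddAbove x)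

theorem stochastic_limit {S : Type*} [Fintype S] [Nonempty S] [DecidableEq S]
    (P : ℕ → ℝ → Matrix S S ℝ) (a1 a2 : ℕ → ℝ) (Pt Pt1 Pt2 : Matrix S S ℝ)
    (s δ : ℝ) (hδ : 0 < δ)
    (hstoch : ∀ k : ℕ, 1 ≤ k → ∀ ε : ℝ, 0 < ε → IsStochastic (P k ε))
    (hi : ∃ c > (0:ℝ), ∃ ε₀ > (0:ℝ), ∀ ε : ℝ, 0 < ε → ε < ε₀ →
      ∀ i : ℕ, 1 ≤ i → (i : ℝ) ≤ Real.log (1/ε) ^ (1 + δ) →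
        matNorm (P i ε - (Pt + (ε * a1 i) • Pt1 + (ε ^ 2 / 2 * a2 i) • Pt2))
          ≤ c * ε ^ 3 * Real.log (1/ε) ^ s) : IsStochastic Pt := by
  obtain ⟨c, hc, ε₀, hε₀, h⟩ := hi
  obtain ⟨ε₁, hε₁, hs⟩ := eventually_small δ s 0 ε₀ hδ hε₀
  have hid : Tendsto (fun ε : ℝ => ε) (𝓝[>] 0) (𝓝 0) := tendsto_id.mono_left nhdsWithin_le_nhds
  have hent : ∀ x y, Tendsto (fun ε => P 1 ε x y) (𝓝[>] 0) (𝓝 (Pt x y)) := by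
    intro x y
    have h1 : Tendsto (fun ε : ℝ => P 1 ε x y
        - (Pt x y + ε * a1 1 * Pt1 x y + ε ^ 2 / 2 * a2 1 * Pt2 x y)) (𝓝[>] 0) (𝓝 0) := by
      have h0 : Tendsto (fun ε : ℝ => c * ε ^ 2) (𝓝[>] 0) (𝓝 0) := by
        simpa using (hid.pow 2).const_mul c
      refine squeeze_zero_norm' ?_ h0
      filter_upwards [Ioo_mem_nhdsGT hε₁] with ε hε
      obtain ⟨b1, b2, b3, b4, b5⟩ := hs ε hε.1 hε.2
      have h2 := (entry_le_matNorm _ x y).trans (h ε hε.1 b1 1 le_rfl (by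
        rw [Nat.cast_one]; exact Real.one_le_rpow b3 (by linarith)))
      simp only [Matrix.sub_apply, Matrix.add_apply, Matrix.smul_apply, smul_eq_mul] at h2
      rw [Real.norm_eq_abs]
      refine h2.trans ?_
      have hε0 : 0 < ε := hε.1
      calc c * ε ^ 3 * Real.log (1/ε) ^ s = c * ε ^ 2 * (ε * Real.log (1/ε) ^ s) := by ring
        _ ≤ c * ε ^ 2 * 1 := by gcongr
        _ = _ := mul_one _
    have h3 : Tendsto (fun ε : ℝ => Pt x y + ε * a1 1 * Pt1 x y + ε ^ 2 / 2 * a2 1 * Pt2 x y)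
        (𝓝[>] 0) (𝓝 (Pt x y)) := by
      have : Continuous (fun ε : ℝ => Pt x y + ε * a1 1 * Pt1 x y + ε ^ 2 / 2 * a2 1 * Pt2 x y) := by
        fun_prop
      have h4 := (this.tendsto 0).mono_left (nhdsWithin_le_nhds (s := Set.Ioi 0))
      simpa using h4
    simpa using h1.add h3
  constructor
  · intro x y
    refine ge_of_tendsto (hent x y) ?_
    filter_upwards [self_mem_nhdsWithin] with ε hε
    exact (hstoch 1 le_rfl ε hε).1 x y
  · intro x
    have h1 : Tendsto (fun ε => ∑ y, P 1 ε x y) (𝓝[>] 0) (𝓝 (∑ y, Pt x y)) :=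
      tendsto_finsetSum _ fun y _ => hent x y
    refine tendsto_nhds_unique h1 (tendsto_const_nhds.congr' ?_)
    filter_upwards [self_mem_nhdsWithin] with ε hε
    exact ((hstoch 1 le_rfl ε hε).2 x).symm

/-- The linear functional `B ↦ μ B r`. -/
noncomputable def phiLin {S : Type*} [Fintype S] (μ r : S → ℝ) : Matrix S S ℝ →ₗ[ℝ] ℝ where
  toFun B := μ ⬝ᵥ (B *ᵥ r)
  map_add' B C := by rw [Matrix.add_mulVec, dotProduct_add]
  map_smul' t B := by simp [Matrix.smul_mulVec, dotProduct_smul]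

theorem mat_inverse {S : Type*} [Fintype S] [Nonempty S] [DecidableEq S]
    {Pt : Matrix S S ℝ} (h : ‖Pt‖ ≤ 1) {α : ℝ} (hα : 0 < α) :
    (1 - Real.exp (-α) • Pt) * (1 - Real.exp (-α) • Pt)⁻¹ = 1 := by
  have hn : ‖Real.exp (-α) • Pt‖ < 1 := by
    rw [norm_smul, Real.norm_of_nonneg (Real.exp_pos _).le]
    exact lt_of_le_of_lt (mul_le_of_le_one_right (Real.exp_pos _).le h)
      (Real.exp_lt_one_iff.2 (by linarith))
  have hu := isUnit_one_sub_of_norm_lt_one hn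
  exact Matrix.mul_nonsing_inv _ ((Matrix.isUnit_iff_isUnit_det _).1 hu)

end MatAux

/-- Theorem 2: under Assumption 2, P̃ is stochastic, the displayed series converge
absolutely, and κ(ε) admits the stated second-order expansion with error
O(ε³(log(1/ε))^w) as ε ↓ 0. -/
theorem discounted_reward_second_order
    {S : Type*} [Fintype S] [Nonempty S] [DecidableEq S]
    (P : ℕ → ℝ → Matrix S S ℝ) (a1 a2 : ℕ → ℝ) (Pt Pt1 Pt2 : Matrix S S ℝ)
    (s δ p : ℝ) (hδ : 0 < δ) (hp : 0 < p)
    (hstoch : ∀ k : ℕ, 1 ≤ k → ∀ ε : ℝ, 0 < ε → IsStochastic (P k ε))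
    (hi : ∃ c > (0:ℝ), ∃ ε₀ > (0:ℝ), ∀ ε : ℝ, 0 < ε → ε < ε₀ →
      ∀ i : ℕ, 1 ≤ i → (i : ℝ) ≤ Real.log (1/ε) ^ (1 + δ) →
        matNorm (P i ε - (Pt + (ε * a1 i) • Pt1 + (ε ^ 2 / 2 * a2 i) • Pt2))
          ≤ c * ε ^ 3 * Real.log (1/ε) ^ s)
    (hii : ∃ c > (0:ℝ), ∃ i₀ : ℕ, ∀ i : ℕ, i₀ ≤ i →
      |a1 i| ≤ c * (i : ℝ) ^ p ∧ |a2 i| ≤ c * (i : ℝ) ^ p)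
    (α : ℝ) (hα : 0 < α)
    (μ r : S → ℝ) (hμ0 : ∀ x, 0 ≤ μ x) (hμ1 : ∑ x, μ x = 1) :
    IsStochastic Pt ∧
      Summable (fun k : ℕ => |a1 (k + 1)| * Real.exp (-α * k) * matNorm (Pt ^ k)) ∧
      Summable (fun k : ℕ => (a1 (k + 1) * Real.exp (-α * k)) • Pt ^ k) ∧
      Summable (fun k : ℕ => |a2 (k + 1)| * Real.exp (-α * k) * matNorm (Pt ^ k)) ∧
      Summable (fun k : ℕ => (a2 (k + 1) * Real.exp (-α * k)) • Pt ^ k) ∧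
      (∀ u : ℕ, Summable (fun j : ℕ => |a1 (u + 2 + j)| * Real.exp (-α * j) * matNorm (Pt ^ j)) ∧
        Summable (fun j : ℕ => (a1 (u + 2 + j) * Real.exp (-α * j)) • Pt ^ j)) ∧
      Summable (fun u : ℕ => matNorm
        ((a1 (u + 1) * Real.exp (-α * u)) •
          (Pt ^ u * Pt1 * (∑' j : ℕ, (a1 (u + 2 + j) * Real.exp (-α * j)) • Pt ^ j) * Pt1 *
            (1 - Real.exp (-α) • Pt)⁻¹))) ∧
      Summable (fun u : ℕ =>
        (a1 (u + 1) * Real.exp (-α * u)) •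
          (Pt ^ u * Pt1 * (∑' j : ℕ, (a1 (u + 2 + j) * Real.exp (-α * j)) • Pt ^ j) * Pt1 *
            (1 - Real.exp (-α) • Pt)⁻¹)) ∧
      ∃ w : ℝ, ∃ c > (0:ℝ), ∃ ε₁ > (0:ℝ), ∀ ε : ℝ, 0 < ε → ε < ε₁ →
        |kappa α μ r (fun k => P k ε) -
            (μ ⬝ᵥ ((1 - Real.exp (-α) • Pt)⁻¹ *ᵥ r) +
              ε * Real.exp (-α) *
                (μ ⬝ᵥ (((∑' k : ℕ, (a1 (k + 1) * Real.exp (-α * k)) • Pt ^ k) * Pt1 *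
                    (1 - Real.exp (-α) • Pt)⁻¹) *ᵥ r)) +
              ε ^ 2 / 2 * Real.exp (-α) *
                (μ ⬝ᵥ (((∑' k : ℕ, (a2 (k + 1) * Real.exp (-α * k)) • Pt ^ k) * Pt2 *
                    (1 - Real.exp (-α) • Pt)⁻¹) *ᵥ r)) +
              ε ^ 2 * Real.exp (-(2 * α)) *
                (μ ⬝ᵥ ((∑' u : ℕ,
                    (a1 (u + 1) * Real.exp (-α * u)) •
                      (Pt ^ u * Pt1 *
                        (∑' j : ℕ, (a1 (u + 2 + j) * Real.exp (-α * j)) • Pt ^ j) * Pt1 *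
                        (1 - Real.exp (-α) • Pt)⁻¹)) *ᵥ r)))|
          ≤ c * ε ^ 3 * Real.log (1/ε) ^ w := by
  have hPt := stochastic_limit P a1 a2 Pt Pt1 Pt2 s δ hδ hstoch hi
  refine ⟨hPt, ?_⟩
  letI := Matrix.linftyOpNormedRing (n := S) (α := ℝ)
  letI := Matrix.linftyOpNormedAlgebra (n := S) (R := ℝ) (α := ℝ)
  simp only [matNorm_eq_norm] at hi ⊢
  exact core_asymp P a1 a2 Pt Pt1 Pt2 ((1 - Real.exp (-α) • Pt)⁻¹) s δ p hδ
    (fun k hk ε hε => norm_le_one_of_stochastic (hstoch k hk ε hε))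
    (norm_le_one_of_stochastic hPt) hi hii α hα
    (mat_inverse (norm_le_one_of_stochastic hPt) hα)
    (LinearMap.toContinuousLinearMap (phiLin μ r))
    (fun ε j => prodP (fun k => P k ε) j) (fun ε => by simp [prodP])
    (fun ε i => by simp [prodP, List.range_succ])
end

section
/- Suppose Assumption 2 holds with a_{i1} = i − 1 and a_{i2} = (i − 1)² for all i ≥ 1. Then there exists w < ∞ such that, writing A = e^{−α}P̃, κ(ε) = μ(I − A)^{−1} r + ε e^{−2α} μ P̃ (I − A)^{−2} P̃⁽¹⁾ (I − A)^{−1} r + (ε²/2) e^{−2α} μ P̃ [2 e^{−α} P̃ (I − A)^{−3} + (I − A)^{−2}] P̃⁽²⁾ (I − A)^{−1} r + 2 ε² e^{−3α} μ P̃ (I − A)^{−3} P̃⁽¹⁾ (I − A)^{−1} P̃⁽¹⁾ (I − A)^{−1} r + ε² e^{−4α} μ P̃ (I − A)^{−2} P̃⁽¹⁾ P̃ (I − A)^{−2} P̃⁽¹⁾ (I − A)^{−1} r + O(ε³(log(1/ε))^w) as ε↓0. -/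
open Matrix Topology Filter

section Helpers

variable {S : Type*} [Fintype S]

lemma aux_row_le_matNorm (A : Matrix S S ℝ) (x : S) : ∑ y, |A x y| ≤ matNorm A :=
  le_ciSup (f := fun x => ∑ y, |A x y|) (Set.finite_range _).bddAbove x

lemma aux_matNorm_nonneg (A : Matrix S S ℝ) : 0 ≤ matNorm A :=
  Real.iSup_nonneg fun _ => Finset.sum_nonneg fun _ _ => abs_nonneg _

lemma aux_norm_mulVec_le (A : Matrix S S ℝ) (v : S → ℝ) : ‖A *ᵥ v‖ ≤ matNorm A * ‖v‖ := by
  refine (pi_norm_le_iff_of_nonneg (mul_nonneg (aux_matNorm_nonneg A) (norm_nonneg v))).2 ?_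
  intro x
  calc ‖(A *ᵥ v) x‖ = |∑ y, A x y * v y| := rfl
    _ ≤ ∑ y, |A x y * v y| := Finset.abs_sum_le_sum_abs _ _
    _ ≤ ∑ y, |A x y| * ‖v‖ := by
        refine Finset.sum_le_sum fun y _ => ?_
        rw [abs_mul]
        exact mul_le_mul_of_nonneg_left (norm_le_pi_norm v y) (abs_nonneg _)
    _ = (∑ y, |A x y|) * ‖v‖ := by rw [Finset.sum_mul]
    _ ≤ matNorm A * ‖v‖ :=
        mul_le_mul_of_nonneg_right (aux_row_le_matNorm A x) (norm_nonneg v)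

lemma aux_stoch_mulVec_le {A : Matrix S S ℝ} (hA : IsStochastic A) (v : S → ℝ) :
    ‖A *ᵥ v‖ ≤ ‖v‖ := by
  refine (pi_norm_le_iff_of_nonneg (norm_nonneg v)).2 ?_
  intro x
  calc ‖(A *ᵥ v) x‖ = |∑ y, A x y * v y| := rfl
    _ ≤ ∑ y, |A x y * v y| := Finset.abs_sum_le_sum_abs _ _
    _ ≤ ∑ y, A x y * ‖v‖ := by
        refine Finset.sum_le_sum fun y _ => ?_
        rw [abs_mul, abs_of_nonneg (hA.1 x y)]
        exact mul_le_mul_of_nonneg_left (norm_le_pi_norm v y) (hA.1 x y)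
    _ = ‖v‖ := by rw [← Finset.sum_mul, hA.2 x, one_mul]

lemma aux_dot_le (μ : S → ℝ) (hμ0 : ∀ x, 0 ≤ μ x) (hμ1 : ∑ x, μ x = 1) (v : S → ℝ) :
    |μ ⬝ᵥ v| ≤ ‖v‖ := by
  calc |μ ⬝ᵥ v| = |∑ y, μ y * v y| := rfl
    _ ≤ ∑ y, |μ y * v y| := Finset.abs_sum_le_sum_abs _ _
    _ ≤ ∑ y, μ y * ‖v‖ := by
        refine Finset.sum_le_sum fun y _ => ?_
        rw [abs_mul, abs_of_nonneg (hμ0 y)]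
        exact mul_le_mul_of_nonneg_left (norm_le_pi_norm v y) (hμ0 y)
    _ = ‖v‖ := by rw [← Finset.sum_mul, hμ1, one_mul]

lemma aux_prodP_succ [DecidableEq S] (Q : ℕ → Matrix S S ℝ) (n : ℕ) :
    prodP Q (n + 1) = prodP Q n * Q (n + 1) := by
  simp [prodP, List.range_succ]

lemma aux_prodP_mulVec_le [DecidableEq S] (Q : ℕ → Matrix S S ℝ)
    (hQ : ∀ k, 1 ≤ k → IsStochastic (Q k)) (n : ℕ) :
    ∀ v : S → ℝ, ‖prodP Q n *ᵥ v‖ ≤ ‖v‖ := by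
  induction n with
  | zero => intro v; simp [prodP]
  | succ n ih =>
    intro v
    rw [aux_prodP_succ, ← Matrix.mulVec_mulVec]
    exact (ih _).trans (aux_stoch_mulVec_le (hQ _ (by omega)) v)

/-- telescoping bound -/
lemma aux_telescope [DecidableEq S] (Q : ℕ → Matrix S S ℝ)
    (hQ : ∀ k, 1 ≤ k → IsStochastic (Q k)) (μ r : S → ℝ)
    (hμ0 : ∀ x, 0 ≤ μ x) (hμ1 : ∑ x, μ x = 1) (β : ℝ) (hβ : 0 < β)
    (U : ℕ → S → ℝ) (e : ℕ → ℝ) (n : ℕ)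
    (hres : ∀ k < n, ‖U k - r - β • (Q (k + 1) *ᵥ U (k + 1))‖ ≤ e k) :
    |(∑ j ∈ Finset.range n, β ^ j * (μ ⬝ᵥ (prodP Q j *ᵥ r))) +
        β ^ n * (μ ⬝ᵥ (prodP Q n *ᵥ U n)) - μ ⬝ᵥ U 0| ≤ ∑ k ∈ Finset.range n, β ^ k * e k := by
  induction n with
  | zero => simp [prodP]
  | succ n ih =>
    have ih' := ih (fun k hk => hres k (by omega))
    have h1 := hres n (by omega)
    have h2 : |μ ⬝ᵥ (prodP Q n *ᵥ (U n - r - β • (Q (n + 1) *ᵥ U (n + 1))))| ≤ e n :=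
      (aux_dot_le μ hμ0 hμ1 _).trans ((aux_prodP_mulVec_le Q hQ n _).trans h1)
    have h3 : β ^ n * |μ ⬝ᵥ (prodP Q n *ᵥ (U n - r - β • (Q (n + 1) *ᵥ U (n + 1))))|
        ≤ β ^ n * e n := mul_le_mul_of_nonneg_left h2 (by positivity)
    rw [Finset.sum_range_succ, Finset.sum_range_succ, aux_prodP_succ, ← Matrix.mulVec_mulVec]
    rw [Matrix.mulVec_sub, Matrix.mulVec_sub, Matrix.mulVec_smul, dotProduct_sub, dotProduct_sub,
      dotProduct_smul, smul_eq_mul] at h3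
    have h4 : β ^ n * |μ ⬝ᵥ (prodP Q n *ᵥ U n) - μ ⬝ᵥ (prodP Q n *ᵥ r) -
        β * (μ ⬝ᵥ (prodP Q n *ᵥ (Q (n + 1) *ᵥ U (n + 1))))| =
        |β ^ n * (μ ⬝ᵥ (prodP Q n *ᵥ U n) - μ ⬝ᵥ (prodP Q n *ᵥ r) -
        β * (μ ⬝ᵥ (prodP Q n *ᵥ (Q (n + 1) *ᵥ U (n + 1)))))| := by
      rw [abs_mul, abs_of_pos (pow_pos hβ n)]
    rw [h4] at h3
    rw [abs_le] at *
    rw [pow_succ]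
    constructor <;> nlinarith

lemma aux_kappa [DecidableEq S] (Q : ℕ → Matrix S S ℝ)
    (hQ : ∀ k, 1 ≤ k → IsStochastic (Q k)) (μ r : S → ℝ)
    (hμ0 : ∀ x, 0 ≤ μ x) (hμ1 : ∑ x, μ x = 1) (α : ℝ) (hα : 0 < α) (β : ℝ)
    (hβ : β = Real.exp (-α))
    (U : ℕ → S → ℝ) (e : ℕ → ℝ) (n : ℕ)
    (hres : ∀ k < n, ‖U k - r - β • (Q (k + 1) *ᵥ U (k + 1))‖ ≤ e k) :
    |kappa α μ r Q - μ ⬝ᵥ U 0| ≤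
      (∑ k ∈ Finset.range n, β ^ k * e k) + β ^ n * (‖U n‖ + ‖r‖ / (1 - β)) := by
  have hβ0 : 0 < β := hβ ▸ Real.exp_pos _
  have hβ1 : β < 1 := by rw [hβ]; exact Real.exp_lt_one_iff.2 (by linarith)
  have hk : kappa α μ r Q = ∑' j : ℕ, β ^ j * (μ ⬝ᵥ (prodP Q j *ᵥ r)) := by
    unfold kappa
    congr 1; ext j
    rw [hβ, ← Real.exp_nat_mul]; congr 2; ring
  have hterm : ∀ j, ‖β ^ j * (μ ⬝ᵥ (prodP Q j *ᵥ r))‖ ≤ β ^ j * ‖r‖ := by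
    intro j
    rw [norm_mul, Real.norm_of_nonneg (by positivity)]
    exact mul_le_mul_of_nonneg_left ((aux_dot_le μ hμ0 hμ1 _).trans
      (aux_prodP_mulVec_le Q hQ j r)) (by positivity)
  have hgs : Summable fun j : ℕ => β ^ j := summable_geometric_of_lt_one hβ0.le hβ1
  have hs : Summable fun j : ℕ => β ^ j * (μ ⬝ᵥ (prodP Q j *ᵥ r)) :=
    Summable.of_norm_bounded (hgs.mul_right ‖r‖) hterm
  have htail : |∑' j : ℕ, β ^ (j + n) * (μ ⬝ᵥ (prodP Q (j + n) *ᵥ r))| ≤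
      β ^ n * (‖r‖ / (1 - β)) := by
    have hh : HasSum (fun j : ℕ => β ^ (j + n) * ‖r‖) (β ^ n * (‖r‖ / (1 - β))) := by
      have := (hasSum_geometric_of_lt_one hβ0.le hβ1).mul_left (β ^ n * ‖r‖)
      have e1 : (fun j : ℕ => β ^ (j + n) * ‖r‖) = fun j : ℕ => β ^ n * ‖r‖ * β ^ j := by
        funext j; rw [pow_add]; ring
      rw [e1, div_eq_mul_inv, ← mul_assoc]
      exact this
    exact tsum_of_norm_bounded hh (fun j => hterm (j + n))
  have hsplit := hs.sum_add_tsum_nat_add n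
  have ht := aux_telescope Q hQ μ r hμ0 hμ1 β hβ0 U e n hres
  have hU : |β ^ n * (μ ⬝ᵥ (prodP Q n *ᵥ U n))| ≤ β ^ n * ‖U n‖ := by
    rw [abs_mul, abs_of_pos (by positivity)]
    exact mul_le_mul_of_nonneg_left ((aux_dot_le μ hμ0 hμ1 _).trans
      (aux_prodP_mulVec_le Q hQ n _)) (by positivity)
  rw [hk, ← hsplit]
  rw [abs_le] at *
  rw [mul_add]
  constructor <;> linarith [ht.1, ht.2, hU.1, hU.2, htail.1, htail.2]

/-- ansatz -/
noncomputable def auxU (ε : ℝ) (u x y a b c : S → ℝ) (k : ℝ) : S → ℝ :=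
  u + ε • (k • x + y) + ε ^ 2 • (k ^ 2 • a + k • b + c)

lemma aux_resid (ε k : ℝ) (A B C : Matrix S S ℝ) (r u x y a b c : S → ℝ)
    (h0 : u = r + A *ᵥ u) (hx : x = A *ᵥ x + B *ᵥ u) (hy : y = A *ᵥ y + A *ᵥ x)
    (ha : a = A *ᵥ a + B *ᵥ x + (1 / 2 : ℝ) • C *ᵥ u)
    (hb : b = A *ᵥ b + (2 : ℝ) • A *ᵥ a + B *ᵥ x + B *ᵥ y)
    (hc : c = A *ᵥ c + A *ᵥ a + A *ᵥ b) :
    auxU ε u x y a b c k - r - (A + (ε * k) • B + (ε ^ 2 / 2 * k ^ 2) • C) *ᵥ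
        auxU ε u x y a b c (k + 1) =
      -(ε ^ 3 • (k • (B *ᵥ ((k + 1) ^ 2 • a + (k + 1) • b + c)) +
        (k ^ 2 / 2) • (C *ᵥ ((k + 1) • x + y)) +
        (ε * k ^ 2 / 2) • (C *ᵥ ((k + 1) ^ 2 • a + (k + 1) • b + c)))) := by
  simp only [auxU, Matrix.add_mulVec, Matrix.smul_mulVec, Matrix.mulVec_add, Matrix.mulVec_smul]
    at *
  linear_combination (norm := module) h0 + (ε * k) • hx + ε • hy + (ε ^ 2 * k ^ 2) • ha +
    (ε ^ 2 * k) • hb + ε ^ 2 • hc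

lemma aux_poly_norm (t D : ℝ) (ht : 1 ≤ t) (a b c : S → ℝ) (hD : ‖a‖ + ‖b‖ + ‖c‖ ≤ D) :
    ‖t ^ 2 • a + t • b + c‖ ≤ t ^ 2 * D := by
  have h1 : ‖t ^ 2 • a + t • b + c‖ ≤ t ^ 2 * ‖a‖ + t * ‖b‖ + ‖c‖ := by
    refine (norm_add₃_le).trans ?_
    rw [norm_smul, norm_smul, Real.norm_of_nonneg (by positivity : (0:ℝ) ≤ t ^ 2),
      Real.norm_of_nonneg (by positivity : (0:ℝ) ≤ t)]
  have : t ≤ t ^ 2 := by nlinarith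
  have h2 : t * ‖b‖ ≤ t ^ 2 * ‖b‖ := mul_le_mul_of_nonneg_right this (norm_nonneg _)
  have h3 : 1 * ‖c‖ ≤ t ^ 2 * ‖c‖ := mul_le_mul_of_nonneg_right (by linarith) (norm_nonneg _)
  have h4 : t ^ 2 * (‖a‖ + ‖b‖ + ‖c‖) ≤ t ^ 2 * D := mul_le_mul_of_nonneg_left hD (by positivity)
  nlinarith

lemma aux_U_norm (ε t D : ℝ) (hε : 0 < ε) (hε1 : ε ≤ 1) (ht : 1 ≤ t) (u x y a b c : S → ℝ)
    (hD : ‖u‖ + ‖x‖ + ‖y‖ + ‖a‖ + ‖b‖ + ‖c‖ ≤ D) :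
    ‖auxU ε u x y a b c t‖ ≤ 3 * D * t ^ 2 := by
  have n1 := norm_nonneg u
  have n2 := norm_nonneg x
  have n3 := norm_nonneg y
  have n4 := norm_nonneg a
  have n5 := norm_nonneg b
  have n6 := norm_nonneg c
  have hD0 : 0 ≤ D := by linarith
  have h1 := aux_poly_norm t D ht a b c (by linarith)
  have h2 := aux_poly_norm t D ht 0 x y (by simp; linarith)
  simp only [smul_zero, zero_add] at h2
  unfold auxU
  refine (norm_add₃_le).trans ?_
  rw [norm_smul, norm_smul, Real.norm_of_nonneg (by positivity : (0:ℝ) ≤ ε ^ 2),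
      Real.norm_of_nonneg hε.le]
  have h3 : ε * ‖t • x + y‖ ≤ 1 * (t ^ 2 * D) := by gcongr
  have h4 : ε ^ 2 * ‖t ^ 2 • a + t • b + c‖ ≤ 1 * (t ^ 2 * D) := by
    gcongr
    exact pow_le_one₀ hε.le hε1
  have h5 : 1 * D ≤ t ^ 2 * D := mul_le_mul_of_nonneg_right (by nlinarith) hD0
  linarith

lemma aux_resid_norm (ε k D : ℝ) (hε : 0 < ε) (hε1 : ε ≤ 1) (hk : 0 ≤ k)
    (B C : Matrix S S ℝ) (x y a b c : S → ℝ)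
    (hD : ‖x‖ + ‖y‖ + ‖a‖ + ‖b‖ + ‖c‖ ≤ D) :
    ‖-(ε ^ 3 • (k • (B *ᵥ ((k + 1) ^ 2 • a + (k + 1) • b + c)) +
        (k ^ 2 / 2) • (C *ᵥ ((k + 1) • x + y)) +
        (ε * k ^ 2 / 2) • (C *ᵥ ((k + 1) ^ 2 • a + (k + 1) • b + c))))‖ ≤
      (D * (matNorm B + 2 * matNorm C)) * ε ^ 3 * (k + 1) ^ 4 := by
  have n2 := norm_nonneg x
  have n3 := norm_nonneg y
  have n4 := norm_nonneg a
  have n5 := norm_nonneg b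
  have n6 := norm_nonneg c
  have hD0 : 0 ≤ D := by linarith
  have hB := aux_matNorm_nonneg B
  have hC := aux_matNorm_nonneg C
  have h1 := aux_poly_norm (k + 1) D (by linarith) a b c (by linarith)
  have h2 := aux_poly_norm (k + 1) D (by linarith) 0 x y (by simp; linarith)
  simp only [smul_zero, zero_add] at h2
  set v := (k + 1) ^ 2 • a + (k + 1) • b + c
  set z := (k + 1) • x + y
  have hBv : ‖B *ᵥ v‖ ≤ matNorm B * ((k + 1) ^ 2 * D) :=
    (aux_norm_mulVec_le B v).trans (mul_le_mul_of_nonneg_left h1 hB)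
  have hCv : ‖C *ᵥ v‖ ≤ matNorm C * ((k + 1) ^ 2 * D) :=
    (aux_norm_mulVec_le C v).trans (mul_le_mul_of_nonneg_left h1 hC)
  have hCz : ‖C *ᵥ z‖ ≤ matNorm C * ((k + 1) ^ 2 * D) :=
    (aux_norm_mulVec_le C z).trans (mul_le_mul_of_nonneg_left h2 hC)
  rw [norm_neg, norm_smul, Real.norm_of_nonneg (by positivity : (0:ℝ) ≤ ε ^ 3)]
  have h3 : ‖k • (B *ᵥ v) + (k ^ 2 / 2) • (C *ᵥ z) + (ε * k ^ 2 / 2) • (C *ᵥ v)‖ ≤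
      (k + 1) ^ 2 * (matNorm B * ((k + 1) ^ 2 * D)) +
      (k + 1) ^ 2 * (matNorm C * ((k + 1) ^ 2 * D)) +
      (k + 1) ^ 2 * (matNorm C * ((k + 1) ^ 2 * D)) := by
    refine (norm_add₃_le).trans ?_
    rw [norm_smul, norm_smul, norm_smul, Real.norm_of_nonneg hk,
      Real.norm_of_nonneg (by positivity : (0:ℝ) ≤ k ^ 2 / 2),
      Real.norm_of_nonneg (by positivity : (0:ℝ) ≤ ε * k ^ 2 / 2)]
    have e1 : k ≤ (k + 1) ^ 2 := by nlinarith
    have e2 : k ^ 2 / 2 ≤ (k + 1) ^ 2 := by nlinarith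
    have e3 : ε * k ^ 2 / 2 ≤ (k + 1) ^ 2 := by nlinarith [sq_nonneg k]
    gcongr
  calc _ ≤ ε ^ 3 * _ := mul_le_mul_of_nonneg_left h3 (by positivity)
    _ = _ := by ring

lemma aux_summable (γ : ℝ) (h0 : 0 < γ) (h1 : γ < 1) :
    Summable fun k : ℕ => γ ^ k * ((k : ℝ) + 1) ^ 4 := by
  have h := summable_pow_mul_geometric_of_norm_lt_one (R := ℝ) 4 (r := γ)
    (by rw [Real.norm_of_nonneg h0.le]; exact h1)
  have h' := (summable_nat_add_iff 1).2 h
  have h'' := h'.mul_left γ⁻¹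
  refine h''.congr fun k => ?_
  push_cast
  rw [pow_succ γ]
  field_simp

lemma aux_log_small (c s : ℝ) :
    Tendsto (fun ε : ℝ => c * ε ^ 3 * Real.log (1 / ε) ^ s) (𝓝[>] 0) (𝓝 0) := by
  have h := (isLittleO_log_rpow_rpow_atTop s (by norm_num : (0:ℝ) < 3)).tendsto_div_nhds_zero
  have h2 := (h.comp tendsto_inv_nhdsGT_zero).const_mul c
  rw [mul_zero] at h2
  refine h2.congr' ?_
  filter_upwards [self_mem_nhdsWithin] with ε hε
  have hε : 0 < ε := hε
  simp only [Function.comp]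
  rw [show (ε⁻¹ : ℝ) ^ (3:ℝ) = ε⁻¹ ^ 3 by norm_cast, one_div]
  field_simp

lemma aux_log_large (K δ : ℝ) (hδ : 0 < δ) :
    ∃ ε₂ > (0:ℝ), ∀ ε : ℝ, 0 < ε → ε < ε₂ → ε ≤ 1 ∧ 1 ≤ Real.log (1 / ε) ∧
      K ≤ Real.log (1 / ε) ^ δ := by
  have hL : Tendsto (fun ε : ℝ => Real.log (1 / ε)) (𝓝[>] 0) atTop := by
    have := Real.tendsto_log_atTop.comp (tendsto_inv_nhdsGT_zero (𝕜 := ℝ))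
    simpa [Function.comp_def] using this
  have hd := (tendsto_rpow_atTop hδ).comp hL
  have e1 : ∀ᶠ ε : ℝ in 𝓝[>] 0, ε ≤ 1 :=
    nhdsWithin_le_nhds (Iic_mem_nhds one_pos)
  have := e1.and ((hL.eventually_ge_atTop 1).and (hd.eventually_ge_atTop K))
  rw [eventually_iff, mem_nhdsGT_iff_exists_Ioo_subset] at this
  obtain ⟨e, he, hs⟩ := this
  exact ⟨e, he, fun ε h0 h1 => hs ⟨h0, h1⟩⟩

/-- decay estimate for the truncation -/
lemma aux_decay (α δ L : ℝ) (hα : 0 < α) (hL : 1 ≤ L) (hK : 6 / α ≤ L ^ δ) (n : ℕ)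
    (hn : L ^ (1 + δ) < n + 1) :
    Real.exp (-(α / 2)) ^ n ≤ Real.exp (α / 2) * Real.exp (-(3 * L)) := by
  rw [← Real.exp_nat_mul, ← Real.exp_add]
  apply Real.exp_le_exp.2
  rw [Real.rpow_add (by linarith), Real.rpow_one] at hn
  have h1 : 6 ≤ α * L ^ δ := by
    rw [div_le_iff₀ hα] at hK; linarith
  have h2 : L * 6 ≤ L * (α * L ^ δ) := mul_le_mul_of_nonneg_left h1 (by linarith)
  have h3 := mul_lt_mul_of_pos_left hn hα
  nlinarith

lemma aux_formula [DecidableEq S] (β ε : ℝ) (hβ : β ≠ 0) (R Pt Pt1 Pt2 : Matrix S S ℝ)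
    (h1 : (1 - β • Pt) * R = 1) (h2 : R * (1 - β • Pt) = 1) (μ r u x y a b c : S → ℝ)
    (hu : u = R *ᵥ r) (hx : x = R *ᵥ ((β • Pt1) *ᵥ u)) (hy : y = R *ᵥ ((β • Pt) *ᵥ x))
    (ha : a = R *ᵥ ((β • Pt1) *ᵥ x + (1 / 2 : ℝ) • ((β • Pt2) *ᵥ u)))
    (hb : b = R *ᵥ ((2 : ℝ) • ((β • Pt) *ᵥ a) + (β • Pt1) *ᵥ x + (β • Pt1) *ᵥ y))
    (hc : c = R *ᵥ ((β • Pt) *ᵥ a + (β • Pt) *ᵥ b)) :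
    μ ⬝ᵥ auxU ε u x y a b c 0 =
          (μ ⬝ᵥ (R *ᵥ r) +
            ε * β ^ 2 * (μ ⬝ᵥ ((Pt * R ^ 2 * Pt1 * R) *ᵥ r)) +
            ε ^ 2 / 2 * β ^ 2 *
              (μ ⬝ᵥ ((Pt * ((2 * β) • (Pt * R ^ 3) + R ^ 2) * Pt2 * R) *ᵥ r)) +
            2 * ε ^ 2 * β ^ 3 *
              (μ ⬝ᵥ ((Pt * R ^ 3 * Pt1 * R * Pt1 * R) *ᵥ r)) +
            ε ^ 2 * β ^ 4 *
              (μ ⬝ᵥ ((Pt * R ^ 2 * Pt1 * Pt * R ^ 2 * Pt1 * R) *ᵥ r))) := by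
  have k1 : ∀ v : S → ℝ, Pt *ᵥ (R *ᵥ v) = β⁻¹ • (R *ᵥ v - v) := by
    intro v
    have := congrArg (fun M => M *ᵥ v) h1
    simp only [← Matrix.mulVec_mulVec, Matrix.sub_mulVec, Matrix.one_mulVec,
      Matrix.smul_mulVec] at this
    rw [eq_inv_smul_iff₀ hβ]
    linear_combination (norm := module) (-1 : ℝ) • this
  have k2 : ∀ v : S → ℝ, R *ᵥ (Pt *ᵥ v) = β⁻¹ • (R *ᵥ v - v) := by
    intro v
    have := congrArg (fun M => M *ᵥ v) h2
    simp only [← Matrix.mulVec_mulVec, Matrix.sub_mulVec, Matrix.one_mulVec,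
      Matrix.smul_mulVec, Matrix.mulVec_sub, Matrix.mulVec_smul] at this
    rw [eq_inv_smul_iff₀ hβ]
    linear_combination (norm := module) (-1 : ℝ) • this
  subst hu hx hy ha hb hc
  simp only [auxU, pow_succ, pow_zero, one_mul, ← Matrix.mulVec_mulVec, Matrix.add_mulVec,
    Matrix.smul_mulVec, Matrix.mulVec_add, Matrix.mulVec_smul, Matrix.mulVec_sub, k1, k2,
    dotProduct_add, dotProduct_smul, dotProduct_sub, smul_eq_mul, zero_mul, zero_smul, mul_zero,
    smul_add, smul_sub, zero_add, dotProduct_zero]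
  field_simp
  ring

end Helpers

set_option maxHeartbeats 2000000 in
/-- Under Assumption 2 with a_{i1} = i − 1 and a_{i2} = (i − 1)², κ(ε) admits the
closed-form second-order expansion of the paper (eq:secondterms), with error
O(ε³(log(1/ε))^w) as ε ↓ 0, where A = e^{−α}P̃. -/
theorem discounted_reward_second_order_linear_drift
    {S : Type*} [Fintype S] [Nonempty S] [DecidableEq S]
    (P : ℕ → ℝ → Matrix S S ℝ) (a1 a2 : ℕ → ℝ) (Pt Pt1 Pt2 : Matrix S S ℝ)
    (s δ p : ℝ) (hδ : 0 < δ) (hp : 0 < p)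
    (ha1 : ∀ i : ℕ, 1 ≤ i → a1 i = (i : ℝ) - 1)
    (ha2 : ∀ i : ℕ, 1 ≤ i → a2 i = ((i : ℝ) - 1) ^ 2)
    (hstoch : ∀ k : ℕ, 1 ≤ k → ∀ ε : ℝ, 0 < ε → IsStochastic (P k ε))
    (hi : ∃ c > (0:ℝ), ∃ ε₀ > (0:ℝ), ∀ ε : ℝ, 0 < ε → ε < ε₀ →
      ∀ i : ℕ, 1 ≤ i → (i : ℝ) ≤ Real.log (1/ε) ^ (1 + δ) →
        matNorm (P i ε - (Pt + (ε * a1 i) • Pt1 + (ε ^ 2 / 2 * a2 i) • Pt2))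
          ≤ c * ε ^ 3 * Real.log (1/ε) ^ s)
    (hii : ∃ c > (0:ℝ), ∃ i₀ : ℕ, ∀ i : ℕ, i₀ ≤ i →
      |a1 i| ≤ c * (i : ℝ) ^ p ∧ |a2 i| ≤ c * (i : ℝ) ^ p)
    (α : ℝ) (hα : 0 < α)
    (μ r : S → ℝ) (hμ0 : ∀ x, 0 ≤ μ x) (hμ1 : ∑ x, μ x = 1) :
    ∃ w : ℝ, ∃ c > (0:ℝ), ∃ ε₁ > (0:ℝ), ∀ ε : ℝ, 0 < ε → ε < ε₁ →
      |kappa α μ r (fun k => P k ε) -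
          (μ ⬝ᵥ ((1 - Real.exp (-α) • Pt)⁻¹ *ᵥ r) +
            ε * Real.exp (-(2 * α)) *
              (μ ⬝ᵥ ((Pt * ((1 - Real.exp (-α) • Pt)⁻¹) ^ 2 * Pt1 *
                  (1 - Real.exp (-α) • Pt)⁻¹) *ᵥ r)) +
            ε ^ 2 / 2 * Real.exp (-(2 * α)) *
              (μ ⬝ᵥ ((Pt *
                  ((2 * Real.exp (-α)) • (Pt * ((1 - Real.exp (-α) • Pt)⁻¹) ^ 3) +
                    ((1 - Real.exp (-α) • Pt)⁻¹) ^ 2) * Pt2 *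
                  (1 - Real.exp (-α) • Pt)⁻¹) *ᵥ r)) +
            2 * ε ^ 2 * Real.exp (-(3 * α)) *
              (μ ⬝ᵥ ((Pt * ((1 - Real.exp (-α) • Pt)⁻¹) ^ 3 * Pt1 *
                  (1 - Real.exp (-α) • Pt)⁻¹ * Pt1 *
                  (1 - Real.exp (-α) • Pt)⁻¹) *ᵥ r)) +
            ε ^ 2 * Real.exp (-(4 * α)) *
              (μ ⬝ᵥ ((Pt * ((1 - Real.exp (-α) • Pt)⁻¹) ^ 2 * Pt1 * Pt *
                  ((1 - Real.exp (-α) • Pt)⁻¹) ^ 2 * Pt1 *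
                  (1 - Real.exp (-α) • Pt)⁻¹) *ᵥ r)))|
        ≤ c * ε ^ 3 * Real.log (1/ε) ^ w := by
  obtain ⟨c₀, hc₀, ε₀, hε₀, hP⟩ := hi
  set β : ℝ := Real.exp (-α) with hβdef
  have hβ0 : 0 < β := Real.exp_pos _
  have hβ1 : β < 1 := Real.exp_lt_one_iff.2 (by linarith)
  -- `Pt` is a contraction in the sup norm
  have hPt : ∀ v : S → ℝ, ‖Pt *ᵥ v‖ ≤ ‖v‖ := by
    intro v
    have hlim : Tendsto (fun ε : ℝ => ‖v‖ + (c₀ * ε ^ 3 * Real.log (1 / ε) ^ s) * ‖v‖)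
        (𝓝[>] 0) (𝓝 (‖v‖ + 0 * ‖v‖)) :=
      ((aux_log_small c₀ s).mul_const _).const_add _
    rw [zero_mul, add_zero] at hlim
    refine ge_of_tendsto hlim ?_
    obtain ⟨e, he, hlog⟩ := aux_log_large 1 (1 + δ) (by linarith)
    filter_upwards [Ioo_mem_nhdsGT (lt_min he hε₀)] with ε hε
    have hL := hlog ε hε.1 (hε.2.trans_le (min_le_left _ _))
    have h1 := hP ε hε.1 (hε.2.trans_le (min_le_right _ _)) 1 le_rfl (by simpa using hL.2.2)
    rw [ha1 1 le_rfl, ha2 1 le_rfl] at h1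
    simp only [Nat.cast_one, sub_self, mul_zero, zero_smul, add_zero, ne_eq, OfNat.ofNat_ne_zero,
      not_false_eq_true, zero_pow] at h1
    have h2 := aux_stoch_mulVec_le (hstoch 1 le_rfl ε hε.1) v
    have h3 := (aux_norm_mulVec_le (P 1 ε - Pt) v).trans
      (mul_le_mul_of_nonneg_right h1 (norm_nonneg v))
    have h4 : Pt *ᵥ v = P 1 ε *ᵥ v - (P 1 ε - Pt) *ᵥ v := by
      rw [Matrix.sub_mulVec]; abel
    rw [h4]
    exact (norm_sub_le _ _).trans (add_le_add h2 h3)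
  have hunit : IsUnit (1 - β • Pt) := by
    rw [← Matrix.mulVec_injective_iff_isUnit]
    intro v w hvw
    have hz : (v - w) = β • (Pt *ᵥ (v - w)) := by
      simp only [Matrix.sub_mulVec, Matrix.one_mulVec, Matrix.smul_mulVec] at hvw
      rw [Matrix.mulVec_sub]
      linear_combination (norm := module) hvw
    have hn : ‖v - w‖ ≤ β * ‖v - w‖ := by
      conv_lhs => rw [hz]
      rw [norm_smul, Real.norm_of_nonneg hβ0.le]
      exact mul_le_mul_of_nonneg_left (hPt _) hβ0.le
    have hn0 : ‖v - w‖ = 0 := by nlinarith [norm_nonneg (v - w)]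
    exact sub_eq_zero.1 (norm_eq_zero.1 hn0)
  have hdet := (Matrix.isUnit_iff_isUnit_det _).1 hunit
  have hR1 : (1 - β • Pt) * (1 - β • Pt)⁻¹ = 1 := Matrix.mul_nonsing_inv _ hdet
  have hR2 : (1 - β • Pt)⁻¹ * (1 - β • Pt) = 1 := Matrix.nonsing_inv_mul _ hdet
  generalize (1 - β • Pt)⁻¹ = R at hR1 hR2 ⊢
  have hRv : ∀ v : S → ℝ, R *ᵥ v = (β • Pt) *ᵥ (R *ᵥ v) + v := by
    intro v
    have := congrArg (fun M => M *ᵥ v) hR1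
    simp only [← Matrix.mulVec_mulVec, Matrix.sub_mulVec, Matrix.one_mulVec] at this
    linear_combination (norm := module) this
  obtain ⟨u, hu⟩ : ∃ u, u = R *ᵥ r := ⟨_, rfl⟩
  obtain ⟨x, hx⟩ : ∃ x, x = R *ᵥ ((β • Pt1) *ᵥ u) := ⟨_, rfl⟩
  obtain ⟨y, hy⟩ : ∃ y, y = R *ᵥ ((β • Pt) *ᵥ x) := ⟨_, rfl⟩
  obtain ⟨a, ha⟩ : ∃ a, a = R *ᵥ ((β • Pt1) *ᵥ x + (1 / 2 : ℝ) • ((β • Pt2) *ᵥ u)) := ⟨_, rfl⟩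
  obtain ⟨b, hb⟩ : ∃ b, b = R *ᵥ ((2 : ℝ) • ((β • Pt) *ᵥ a) + (β • Pt1) *ᵥ x +
    (β • Pt1) *ᵥ y) := ⟨_, rfl⟩
  obtain ⟨c, hc⟩ : ∃ c, c = R *ᵥ ((β • Pt) *ᵥ a + (β • Pt) *ᵥ b) := ⟨_, rfl⟩
  have eu : u = r + (β • Pt) *ᵥ u := by
    have := hRv r
    rw [← hu] at this
    rw [add_comm]; exact this
  have ex : x = (β • Pt) *ᵥ x + (β • Pt1) *ᵥ u := by
    have := hRv ((β • Pt1) *ᵥ u)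
    rw [← hx] at this
    exact this
  have ey : y = (β • Pt) *ᵥ y + (β • Pt) *ᵥ x := by
    have := hRv ((β • Pt) *ᵥ x)
    rw [← hy] at this
    exact this
  have ea : a = (β • Pt) *ᵥ a + (β • Pt1) *ᵥ x + (1 / 2 : ℝ) • ((β • Pt2) *ᵥ u) := by
    have := hRv ((β • Pt1) *ᵥ x + (1 / 2 : ℝ) • ((β • Pt2) *ᵥ u))
    rw [← ha, ← add_assoc] at this
    exact this
  have eb : b = (β • Pt) *ᵥ b + (2 : ℝ) • ((β • Pt) *ᵥ a) + (β • Pt1) *ᵥ x + (β • Pt1) *ᵥ y := by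
    have := hRv ((2 : ℝ) • ((β • Pt) *ᵥ a) + (β • Pt1) *ᵥ x + (β • Pt1) *ᵥ y)
    rw [← hb, ← add_assoc, ← add_assoc] at this
    exact this
  have ec : c = (β • Pt) *ᵥ c + (β • Pt) *ᵥ a + (β • Pt) *ᵥ b := by
    have := hRv ((β • Pt) *ᵥ a + (β • Pt) *ᵥ b)
    rw [← hc, ← add_assoc] at this
    exact this
  have hform := fun ε : ℝ => aux_formula β ε hβ0.ne' R Pt Pt1 Pt2 hR1 hR2 μ r u x y a b c
    hu hx hy ha hb hc
  have p2 : Real.exp (-(2 * α)) = β ^ 2 := by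
    rw [hβdef, ← Real.exp_nat_mul]; congr 1; push_cast; ring
  have p3 : Real.exp (-(3 * α)) = β ^ 3 := by
    rw [hβdef, ← Real.exp_nat_mul]; congr 1; push_cast; ring
  have p4 : Real.exp (-(4 * α)) = β ^ 4 := by
    rw [hβdef, ← Real.exp_nat_mul]; congr 1; push_cast; ring
  rw [p2, p3, p4]
  clear hu hx hy ha hb hc
  -- constants
  obtain ⟨D, hD⟩ : ∃ D, D = ‖u‖ + ‖x‖ + ‖y‖ + ‖a‖ + ‖b‖ + ‖c‖ := ⟨_, rfl⟩
  have hD0 : 0 ≤ D := by rw [hD]; positivity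
  obtain ⟨K, hK⟩ : ∃ K, K = D * (matNorm (β • Pt1) + 2 * matNorm (β • Pt2)) + 3 * c₀ * D :=
    ⟨_, rfl⟩
  have hK1 : 0 ≤ D * (matNorm (β • Pt1) + 2 * matNorm (β • Pt2)) := by
    have := aux_matNorm_nonneg (β • Pt1)
    have := aux_matNorm_nonneg (β • Pt2)
    positivity
  have hK0 : 0 ≤ K := by rw [hK]; positivity
  obtain ⟨γ, hγ⟩ : ∃ γ : ℝ, γ = Real.exp (-(α / 2)) := ⟨_, rfl⟩
  have hγ0 : 0 < γ := hγ ▸ Real.exp_pos _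
  have hγ1 : γ < 1 := by rw [hγ]; exact Real.exp_lt_one_iff.2 (by linarith)
  have hβγ : β = γ * γ := by rw [hβdef, hγ, ← Real.exp_add]; congr 1; ring
  have hsβ := aux_summable β hβ0 hβ1
  have hsγ := aux_summable γ hγ0 hγ1
  set T := ∑' k : ℕ, β ^ k * ((k : ℝ) + 1) ^ 4 with hT
  set M := ∑' k : ℕ, γ ^ k * ((k : ℝ) + 1) ^ 4 with hM
  have hT0 : 0 ≤ T := tsum_nonneg fun k => by positivity
  have hM0 : 0 ≤ M := tsum_nonneg fun k => by positivity
  obtain ⟨G, hG⟩ : ∃ G, G = 3 * D + ‖r‖ / (1 - β) := ⟨_, rfl⟩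
  have hr0 : 0 ≤ ‖r‖ / (1 - β) := div_nonneg (norm_nonneg _) (by linarith)
  have hG0 : 0 ≤ G := by rw [hG]; positivity
  obtain ⟨ε₂, hε₂, hlog⟩ := aux_log_large (6 / α) δ hδ
  refine ⟨max s 0, K * T + Real.exp (α / 2) * M * G + 1, by positivity, min ε₀ ε₂,
    lt_min hε₀ hε₂, ?_⟩
  intro ε hε hεlt
  obtain ⟨hε1, hL1, hLK⟩ := hlog ε hε (hεlt.trans_le (min_le_right _ _))
  have hPε := hP ε hε (hεlt.trans_le (min_le_left _ _))
  have hexpL : Real.exp (-(3 * Real.log (1 / ε))) = ε ^ 3 := by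
    rw [one_div, Real.log_inv, show -(3 * -Real.log ε) = ((3 : ℕ) : ℝ) * Real.log ε by
      push_cast; ring, Real.exp_nat_mul, Real.exp_log hε]
  rw [← hform ε]
  set L := Real.log (1 / ε) with hL
  obtain ⟨W, hW⟩ : ∃ W, W = L ^ (max s 0) := ⟨_, rfl⟩
  have hW1 : 1 ≤ W := by rw [hW]; exact Real.one_le_rpow hL1 (le_max_right _ _)
  have hWs : L ^ s ≤ W := by
    rw [hW]; exact Real.rpow_le_rpow_of_exponent_le hL1 (le_max_left _ _)
  rw [← hW]
  obtain ⟨n, hn⟩ : ∃ n, n = ⌊L ^ (1 + δ)⌋₊ := ⟨_, rfl⟩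
  have hLpos : 0 ≤ L ^ (1 + δ) := Real.rpow_nonneg (by linarith) _
  have hn1 : (n : ℝ) ≤ L ^ (1 + δ) := by rw [hn]; exact Nat.floor_le hLpos
  have hn2 : L ^ (1 + δ) < n + 1 := by rw [hn]; exact Nat.lt_floor_add_one _
  have hres : ∀ k < n, ‖auxU ε u x y a b c ((k : ℕ) : ℝ) - r -
      β • (P (k + 1) ε *ᵥ auxU ε u x y a b c ((k + 1 : ℕ) : ℝ))‖ ≤
      K * ε ^ 3 * W * ((k : ℝ) + 1) ^ 4 := by
    intro k hk
    have hk' : ((k + 1 : ℕ) : ℝ) ≤ L ^ (1 + δ) :=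
      le_trans (by exact_mod_cast hk) hn1
    have hE := hPε (k + 1) (by omega) hk'
    rw [ha1 (k + 1) (by omega), ha2 (k + 1) (by omega)] at hE
    push_cast at hE ⊢
    rw [add_sub_cancel_right] at hE
    set E := P (k + 1) ε - (Pt + (ε * (k : ℝ)) • Pt1 + (ε ^ 2 / 2 * (k : ℝ) ^ 2) • Pt2) with hEdef
    have hk0 : (0 : ℝ) ≤ k := Nat.cast_nonneg k
    have hUn := aux_U_norm ε ((k : ℝ) + 1) D hε hε1 (by linarith) u x y a b c hD.ge
    have h1 := aux_resid ε (k : ℝ) (β • Pt) (β • Pt1) (β • Pt2) r u x y a b c eu ex ey ea eb ec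
    have h2 := aux_resid_norm ε (k : ℝ) D hε hε1 hk0 (β • Pt1) (β • Pt2) x y a b c
      (by rw [hD]; linarith [norm_nonneg u])
    rw [← h1] at h2
    clear h1
    set V := auxU ε u x y a b c ((k : ℝ) + 1)
    have hEV : ‖β • (E *ᵥ V)‖ ≤ 1 * ((c₀ * ε ^ 3 * W) * (3 * D * ((k : ℝ) + 1) ^ 2)) := by
      rw [norm_smul, Real.norm_of_nonneg hβ0.le]
      have hEW : matNorm E ≤ c₀ * ε ^ 3 * W := hE.trans (by gcongr)
      refine mul_le_mul hβ1.le ?_ (norm_nonneg _) zero_le_one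
      refine (aux_norm_mulVec_le E V).trans ?_
      exact mul_le_mul hEW hUn (norm_nonneg _) (by positivity)
    have hsplit : auxU ε u x y a b c (k : ℝ) - r - β • (P (k + 1) ε *ᵥ V) =
        (auxU ε u x y a b c (k : ℝ) - r - (β • Pt + (ε * (k : ℝ)) • (β • Pt1) +
          (ε ^ 2 / 2 * (k : ℝ) ^ 2) • (β • Pt2)) *ᵥ V) - β • (E *ᵥ V) := by
      simp only [hEdef, Matrix.sub_mulVec, Matrix.add_mulVec, Matrix.smul_mulVec]
      module
    rw [hsplit]
    refine (norm_sub_le _ _).trans ((add_le_add h2 hEV).trans ?_)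
    have hk1 : ((k : ℝ) + 1) ^ 2 ≤ ((k : ℝ) + 1) ^ 4 :=
      pow_le_pow_right₀ (by linarith) (by norm_num)
    have g1 : D * (matNorm (β • Pt1) + 2 * matNorm (β • Pt2)) * ε ^ 3 * ((k : ℝ) + 1) ^ 4 * 1 ≤
        D * (matNorm (β • Pt1) + 2 * matNorm (β • Pt2)) * ε ^ 3 * ((k : ℝ) + 1) ^ 4 * W :=
      mul_le_mul_of_nonneg_left hW1 (by positivity)
    have g2 : (c₀ * ε ^ 3 * W) * (3 * D * ((k : ℝ) + 1) ^ 2) ≤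
        (c₀ * ε ^ 3 * W) * (3 * D * ((k : ℝ) + 1) ^ 4) := by gcongr
    rw [hK]
    linarith
  have hkap := aux_kappa (fun k => P k ε) (fun k hk => hstoch k hk ε hε) μ r hμ0 hμ1 α hα β hβdef
    (fun k : ℕ => auxU ε u x y a b c (k : ℝ)) (fun k => K * ε ^ 3 * W * ((k : ℝ) + 1) ^ 4) n hres
  simp only [Nat.cast_zero] at hkap
  refine hkap.trans ?_
  -- the finite sum
  have s1 : ∑ k ∈ Finset.range n, β ^ k * (K * ε ^ 3 * W * ((k : ℝ) + 1) ^ 4) ≤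
      (K * ε ^ 3 * W) * T := by
    have e1 : ∑ k ∈ Finset.range n, β ^ k * (K * ε ^ 3 * W * ((k : ℝ) + 1) ^ 4) =
        (K * ε ^ 3 * W) * ∑ k ∈ Finset.range n, β ^ k * ((k : ℝ) + 1) ^ 4 := by
      rw [Finset.mul_sum]
      exact Finset.sum_congr rfl fun k _ => by ring
    rw [e1]
    exact mul_le_mul_of_nonneg_left (hsβ.sum_le_tsum _ fun k _ => by positivity) (by positivity)
  -- the tail
  have hn0 : (0 : ℝ) ≤ n := Nat.cast_nonneg n
  have hUn : ‖auxU ε u x y a b c (n : ℝ)‖ ≤ 3 * D * ((n : ℝ) + 1) ^ 4 := by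
    have hn3 : 1 ≤ (n : ℝ) := by
      have h : 1 ≤ n := by
        rw [hn]
        refine Nat.le_floor ?_
        simpa using Real.one_le_rpow hL1 (by linarith : (0:ℝ) ≤ 1 + δ)
      exact_mod_cast h
    refine (aux_U_norm ε (n : ℝ) D hε hε1 hn3 u x y a b c hD.ge).trans ?_
    have : (n : ℝ) ^ 2 ≤ ((n : ℝ) + 1) ^ 4 := 
      (pow_le_pow_left₀ hn0 (by linarith) 2).trans
        (pow_le_pow_right₀ (by linarith) (by norm_num))
    gcongr
  have hfac : ‖auxU ε u x y a b c (n : ℝ)‖ + ‖r‖ / (1 - β) ≤ G * ((n : ℝ) + 1) ^ 4 := by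
    have : 1 ≤ ((n : ℝ) + 1) ^ 4 := one_le_pow₀ (by linarith)
    have := mul_le_mul_of_nonneg_left this hr0
    rw [hG]
    linarith
  have hdec := aux_decay α δ L hα hL1 hLK n hn2
  rw [← hγ, hexpL] at hdec
  have hMn : γ ^ n * ((n : ℝ) + 1) ^ 4 ≤ M := hsγ.le_tsum n fun k _ => by positivity
  have s2 : β ^ n * (‖auxU ε u x y a b c (n : ℝ)‖ + ‖r‖ / (1 - β)) ≤
      (Real.exp (α / 2) * ε ^ 3) * M * G * W := by
    calc β ^ n * (‖auxU ε u x y a b c (n : ℝ)‖ + ‖r‖ / (1 - β))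
        ≤ β ^ n * (G * ((n : ℝ) + 1) ^ 4) := mul_le_mul_of_nonneg_left hfac (by positivity)
      _ = γ ^ n * (γ ^ n * ((n : ℝ) + 1) ^ 4) * G * 1 := by rw [hβγ, mul_pow]; ring
      _ ≤ (Real.exp (α / 2) * ε ^ 3) * M * G * W := by gcongr
  have s3 : 0 ≤ ε ^ 3 * W := by positivity
  calc _ ≤ (K * ε ^ 3 * W) * T + (Real.exp (α / 2) * ε ^ 3) * M * G * W := add_le_add s1 s2
    _ ≤ _ := by linarith
end
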